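/- For each real A > 2, let q_A be a geometric random variable with P(q_A = k) = (2/A)(1 - 2/A)^{k-1} for k ≥ 1, and let U be uniform on [0,1], with ε, q_A, U independent. Set γ_A = ℓ~_{N(q_A)}, x_A = X_{N(q_A)}, and let u_A be the ⌈U · #I(γ_A)⌉-th smallest element of the finite set I(γ_A). Then the total variation distance between the law of the pair (u_A, γ_A) and the law of the pair (x_A, γ_A) tends to 0 as A → ∞. -/

import Mathlib

open MeasureTheory Filter

/-- Initial local time: edge `i` denotes the half-integer edge `i + 1/2`
joining `i` and `i+1`; `aInit i = a(i + 1/2)`, which is `0` if `|i+1/2| - 1/2`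
is even and `-1` if it is odd. -/
def aInit (i : ℤ) : ℤ := if Even (if 0 ≤ i then i else -i - 1) then 0 else -1

/-- State of the self-repelling walk: current position, edge local times
(`loc i` is the local time of the edge joining `i` and `i+1`, i.e. of the
half-integer edge `i + 1/2`), and the number of coins used so far. -/
structure SRWState where
  pos : ℤ
  loc : ℤ → ℤ
  coins : ℕ

/-- One step of the self-repelling walk driven by the coin sequence `ε`. -/
def srwStep (ε : ℕ → ℤ) (s : SRWState) : SRWState :=
  let lm := s.loc (s.pos - 1)   -- ℓ_n⁻ = ℓ_n(X_n - 1/2)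
  let lp := s.loc s.pos         -- ℓ_n⁺ = ℓ_n(X_n + 1/2)
  let next : ℤ := if lp < lm then s.pos + 1
    else if lm < lp then s.pos - 1
    else s.pos + ε s.coins
  { pos := next
    loc := fun i => if i = min s.pos next then s.loc i + 1 else s.loc i
    coins := if lm = lp then s.coins + 1 else s.coins }

/-- The self-repelling walk: state after `n` steps. -/
def srw (ε : ℕ → ℤ) : ℕ → SRWState
  | 0 => ⟨0, aInit, 0⟩
  | n + 1 => srwStep ε (srw ε n)

/-- Position `X_n` of the self-repelling walk. -/
def Xwalk (ε : ℕ → ℤ) (n : ℕ) : ℤ := (srw ε n).pos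

/-- Edge local time `ℓ_n(i + 1/2)`. -/
def ellEdge (ε : ℕ → ℤ) (n : ℕ) (i : ℤ) : ℤ := (srw ε n).loc i

/-- `ℓ_n⁻ = ℓ_n(X_n - 1/2)`. -/
def ellMinus (ε : ℕ → ℤ) (n : ℕ) : ℤ := ellEdge ε n (Xwalk ε n - 1)

/-- `ℓ_n⁺ = ℓ_n(X_n + 1/2)`. -/
def ellPlus (ε : ℕ → ℤ) (n : ℕ) : ℤ := ellEdge ε n (Xwalk ε n)

/-- `n` is an equality time: `ℓ_n⁻ = ℓ_n⁺`. -/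
def IsEqTime (ε : ℕ → ℤ) (n : ℕ) : Prop := ellMinus ε n = ellPlus ε n

/-- `N(k)`: the `(k+1)`-st smallest equality time. -/
noncomputable def timeN (ε : ℕ → ℤ) (k : ℕ) : ℕ := Nat.nth (IsEqTime ε) k

/-- `H_n = (ℓ_n⁻ + ℓ_n⁺)/2`. -/
def Hheight (ε : ℕ → ℤ) (n : ℕ) : ℤ := (ellMinus ε n + ellPlus ε n) / 2

/-- `ã(x)`: `0` for even `x`, `-1` for odd `x`. -/
def aTilde (x : ℤ) : ℤ := if Even x then 0 else -1

/-- Modified local time `ℓ~_n(x)`: equals `ℓ_n(x - 1/2)` for `x ≤ X_n` and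
`ℓ_n(x + 1/2)` for `x > X_n`. -/
def modLoc (ε : ℕ → ℤ) (n : ℕ) (x : ℤ) : ℤ :=
  if x ≤ Xwalk ε n then ellEdge ε n (x - 1) else ellEdge ε n x

/-- Area `𝒜(f) = Σ_x (f(x) - ã(x))` between `f` and `ã`. -/
noncomputable def areaA (f : ℤ → ℤ) : ℤ := ∑ᶠ x : ℤ, (f x - aTilde x)

/-- `m₋(f) = 1 + max {x ≤ 0 : f x = -1}`. -/
noncomputable def mMinus (f : ℤ → ℤ) : ℤ := 1 + sSup {x : ℤ | x ≤ 0 ∧ f x = -1}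

/-- `m₊(f) = -1 + min {x ≥ 0 : f x = -1}`. -/
noncomputable def mPlus (f : ℤ → ℤ) : ℤ := -1 + sInf {x : ℤ | 0 ≤ x ∧ f x = -1}

/-- `O(f)`: the number of zeros of `f` strictly between `m₋(f)` and `m₊(f)`. -/
noncomputable def nZeros (f : ℤ → ℤ) : ℕ :=
  {x : ℤ | mMinus f < x ∧ x < mPlus f ∧ f x = 0}.ncard

/-- `o₊ = max {x < m₊(f) : f x = 0}`. -/
noncomputable def oPlus (f : ℤ → ℤ) : ℤ := sSup {x : ℤ | x < mPlus f ∧ f x = 0}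

/-- `o₋ = min {x > m₋(f) : f x = 0}`. -/
noncomputable def oMinus (f : ℤ → ℤ) : ℤ := sInf {x : ℤ | mMinus f < x ∧ f x = 0}

open Classical in
/-- The admissible interval `I(f)`. -/
noncomputable def interI (f : ℤ → ℤ) : Set ℤ :=
  if f = aTilde then {0}
  else if nZeros f = 0 then Set.Icc (mMinus f) (mPlus f)
  else if 0 < oPlus f then Set.Ioc (oPlus f) (mPlus f)
  else Set.Ico (mMinus f) (oMinus f)

/-- Coins as `±1`-valued integers from booleans. -/
def coin (ω : ℕ → Bool) (j : ℕ) : ℤ := if ω j then 1 else -1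

/-- Total variation distance between two measures (as a real number):
supremum over measurable sets of the absolute difference of measures. -/
noncomputable def tvDist {α : Type*} [MeasurableSpace α] (μ ν : Measure α) : ℝ :=
  ⨆ E : {E : Set α // MeasurableSet E}, |(μ E.1).toReal - (ν E.1).toReal|

/-- The modified local time `γ_A = ℓ~_{N(q_A)}` as a function of the sample
`ω = (coins, value of q_A, value of U)`. -/
noncomputable def gammaRV (ω : (ℕ → Bool) × ℕ × ℝ) : ℤ → ℤ :=
  modLoc (coin ω.1) (timeN (coin ω.1) ω.2.1)

/-- The position `x_A = X_{N(q_A)}`. -/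
noncomputable def xRV (ω : (ℕ → Bool) × ℕ × ℝ) : ℤ :=
  Xwalk (coin ω.1) (timeN (coin ω.1) ω.2.1)

/-- `u_A`: the `⌈U · #I(γ_A)⌉`-th smallest element of the finite set of
consecutive integers `I(γ_A)`, i.e. `(min I(γ_A)) + ⌈U · #I(γ_A)⌉ - 1`. -/
noncomputable def uRV (ω : (ℕ → Bool) × ℕ × ℝ) : ℤ :=
  sInf (interI (gammaRV ω)) + ⌈ω.2.2 * ((interI (gammaRV ω)).ncard : ℝ)⌉ - 1

/-!
A state of the walk is a position together with the local time profile seen from it, and its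
probability is explicit: the profile, read away from the walker on both sides, has the law of a
simple random walk reflected at `0` and finally absorbed in the initial profile. At equality times
and in terms of the modified local time `g` this weight hardly depends on the position: it is the
same at all positions in `I(g)` of positive height and vanishes outside `I(g)`. Moreover the number
of coins used is determined by `g` and the height `g x`. So, at a geometric time with ratio `z`
close to `1`, the position given `g` is uniform on `I(g)` up to two errors. The states of height
zero have small mass, because the discount turns their mass into a return probability of the
reflected walk discounted by the area below it. The factor `z ^ g x` due to the height is close to
`1`, because after `k` coins the height is only of order `√k`.
-/

namespace SelfRepellingWalk

open Set Topology

/-! ### Local weights -/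

/-- Weight of a step `a → b` of the local time profile read away from the walker, at the site `y`
(reflected to `-y` on the left of the walker): a simple random walk step at positive heights,
reflection at height `0` before the origin, and afterwards absorption into the alternating initial
profile `0, -1, 0, -1, …`. -/
noncomputable def stepWeight (y a b : ℤ) : ℝ :=
  if ¬ 2 ∣ a - y then 0
  else if 1 ≤ a then (if b = a + 1 ∨ b = a - 1 then 1 / 2 else 0)
  else if a = 0 then (if b = (if 0 ≤ y then -1 else 1) then 1 else 0)
  else if a = -1 ∧ 0 < y ∧ b = 0 then 1 else 0

/-- Weight of the pair `(ℓ⁻, ℓ⁺)` of local times of the two edges at the walker. -/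
noncomputable def contactWeight (b c : ℤ) : ℝ :=
  if b = c then (if 0 ≤ b then 1 else 0)
  else if b = c + 2 ∨ c = b + 2 then
    (if min b c = -1 then 1 else if 0 ≤ min b c then 1 / 2 else 0)
  else 0

/-- Probability that the walker crosses the edge of local time `v` when its other edge has local
time `u`. -/
noncomputable def crossProb (u v : ℤ) : ℝ := if v < u then 1 else if u = v then 1 / 2 else 0

lemma stepWeight_nonneg (y a b : ℤ) : 0 ≤ stepWeight y a b := by
  unfold stepWeight; split_ifs <;> norm_num

lemma stepWeight_le_one (y a b : ℤ) : stepWeight y a b ≤ 1 := by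
  unfold stepWeight; split_ifs <;> norm_num

lemma contactWeight_nonneg (b c : ℤ) : 0 ≤ contactWeight b c := by
  unfold contactWeight; split_ifs <;> norm_num

lemma crossProb_nonneg (u v : ℤ) : 0 ≤ crossProb u v := by
  unfold crossProb; split_ifs <;> norm_num

lemma crossProb_pos {u v : ℤ} (h : v ≤ u) : 0 < crossProb u v := by
  unfold crossProb; split_ifs <;> first | omega | norm_num

lemma contactWeight_comm (b c : ℤ) : contactWeight b c = contactWeight c b := by
  unfold contactWeight; split_ifs <;> first | rfl | omega

lemma stepWeight_of_one_le {y a b : ℤ} (ha : 1 ≤ a) :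
    stepWeight y a b = if 2 ∣ a - y ∧ (b = a + 1 ∨ b = a - 1) then 1 / 2 else 0 := by
  unfold stepWeight
  split_ifs <;> first | rfl | omega

lemma stepWeight_zero (y b : ℤ) :
    stepWeight y 0 b = if 2 ∣ y ∧ b = (if 0 ≤ y then -1 else 1) then 1 else 0 := by
  unfold stepWeight
  split_ifs <;> first | rfl | omega

lemma stepWeight_neg_one (y b : ℤ) :
    stepWeight y (-1) b = if ¬ 2 ∣ y ∧ 0 < y ∧ b = 0 then 1 else 0 := by
  have hy : 2 ∣ -1 - y ↔ ¬ 2 ∣ y := by omega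
  by_cases h : 2 ∣ y <;> simp [stepWeight, hy, h]

lemma stepWeight_of_lt_neg_one {y a b : ℤ} (ha : a < -1) : stepWeight y a b = 0 := by
  unfold stepWeight
  split_ifs <;> first | rfl | omega

/-- The steps of positive weight. -/
structure IsStep (y a b : ℤ) : Prop where
  even : 2 ∣ a - y
  neg_one_le : -1 ≤ a
  adjacent : b = a + 1 ∨ b = a - 1
  absorbed : a = 0 → 0 ≤ y → b = -1
  reflected : a = 0 → y < 0 → b = 1
  alternating : a = -1 → 0 < y ∧ b = 0

lemma stepWeight_ne_zero_iff {y a b : ℤ} : stepWeight y a b ≠ 0 ↔ IsStep y a b := by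
  constructor
  · intro h
    unfold stepWeight at h
    split_ifs at h <;> first | exact absurd rfl h | (constructor <;> omega)
  · rintro ⟨h1, h2, h3, h4, h5, h6⟩
    unfold stepWeight
    split_ifs <;> first | (exfalso; omega) | norm_num

lemma contactWeight_ne_zero {b c : ℤ} (h : contactWeight b c ≠ 0) :
    -1 ≤ min b c ∧ (b = c ∧ 0 ≤ b ∨ b = c + 2 ∨ c = b + 2) := by
  unfold contactWeight at h
  split_ifs at h <;> first | exact absurd rfl h | omega

lemma crossProb_mul_contactWeight (a b : ℤ) :
    crossProb a (b - 1) * contactWeight a (b - 1) =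
      if 1 ≤ b ∧ (a = b + 1 ∨ a = b - 1) then 1 / 2 else if b = 0 ∧ a = 1 then 1 else 0 := by
  unfold crossProb contactWeight
  split_ifs <;> first | omega | norm_num

private lemma stepWeight_pred {y b c : ℤ} (hb : 1 ≤ b) (hc : 1 ≤ c) (hby : 2 ∣ b - 1 - y) :
    stepWeight y (b - 1) c =
      if b = 1 then (if c = 1 ∧ y < 0 then 1 else 0)
      else if c = b ∨ c = b - 2 then 1 / 2 else 0 := by
  unfold stepWeight
  split_ifs <;> first | rfl | omega

/-- Away from height `0`, the walker reaches its site from one of the two sides, and the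
uncrossed edge accounts for the step of the profile across the site. -/
lemma stepWeight_add_stepWeight {X b c : ℤ} (hb : 1 ≤ b) (hc : 1 ≤ c) (hbX : 2 ∣ b + X)
    (hcX : 2 ∣ c - X) :
    stepWeight (X - 1) (b - 1) c + stepWeight (-(X + 1)) (c - 1) b = contactWeight b c := by
  rw [stepWeight_pred hb hc (by omega), stepWeight_pred hc hb (by omega)]
  unfold contactWeight
  split_ifs <;> first | omega | norm_num

private lemma backward_identity_of_one_le {X a b c d : ℤ} (hb : 1 ≤ b) (hc : 1 ≤ c) :
    crossProb a (b - 1) * contactWeight a (b - 1) *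
        (stepWeight (X - 1) (b - 1) c * stepWeight X c d) +
      crossProb d (c - 1) * contactWeight d (c - 1) *
        (stepWeight (-(X + 1)) (c - 1) b * stepWeight (-X) b a) =
    contactWeight b c * (stepWeight (-X) b a * stepWeight X c d) := by
  have parity {y a b : ℤ} (h : ¬ 2 ∣ a - y) : stepWeight y a b = 0 := by simp [stepWeight, h]
  by_cases hbX : 2 ∣ b + X
  · by_cases hcX : 2 ∣ c - X
    · have hT {y a b : ℤ} (hb : 1 ≤ b) (hy : 2 ∣ b - y) :
          crossProb a (b - 1) * contactWeight a (b - 1) = stepWeight y b a := by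
        rw [crossProb_mul_contactWeight, stepWeight_of_one_le hb]
        split_ifs <;> first | rfl | omega
      rw [hT hb (by omega : 2 ∣ b - -X), hT hc hcX, ← stepWeight_add_stepWeight hb hc hbX hcX]
      ring
    · rw [parity (y := X) hcX, parity (y := -(X + 1)) (by omega)]
      ring
  · rw [parity (y := -X) (by omega), parity (y := X - 1) (by omega)]
    ring

private lemma backward_identity_of_eq_neg_one {X a c d : ℤ} :
    crossProb d (c - 1) * contactWeight d (c - 1) *
        (stepWeight (-(X + 1)) (c - 1) (-1) * stepWeight (-X) (-1) a) =
    contactWeight (-1) c * (stepWeight (-X) (-1) a * stepWeight X c d) := by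
  obtain hc | rfl | hc : c ≤ 0 ∨ c = 1 ∨ 2 ≤ c := by omega
  · have h : contactWeight (-1) c = 0 := by
      unfold contactWeight; split_ifs <;> first | rfl | omega
    rw [crossProb_mul_contactWeight, h, stepWeight_neg_one]
    obtain hc | rfl : c < 0 ∨ c = 0 := by omega
    · simp [show ¬ 1 ≤ c by omega, hc.ne]
    · simp [stepWeight_neg_one]
  · by_cases hX : ¬ 2 ∣ X ∧ X < 0
    · rw [crossProb_mul_contactWeight, sub_self, stepWeight_zero, stepWeight_of_one_le le_rfl,
        show contactWeight (-1) 1 = 1 by norm_num [contactWeight]]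
      split_ifs <;> first | omega | ring
    · have h : stepWeight (-X) (-1) a = 0 := by
        rw [stepWeight_neg_one]; split_ifs <;> first | rfl | omega
      simp [h]
  · have h : contactWeight (-1) c = 0 := by
      unfold contactWeight; split_ifs <;> first | rfl | omega
    rw [h, stepWeight_of_one_le (show 1 ≤ c - 1 by omega), if_neg (by omega)]
    ring

private lemma backward_identity_of_eq_zero {X a c d : ℤ} (hc : 0 ≤ c) (h0 : ¬ (X = 0 ∧ c = 0)) :
    (if a = 1 then 1 else 0) * (stepWeight (X - 1) (-1) c * stepWeight X c d) +
      crossProb d (c - 1) * contactWeight d (c - 1) *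
        (stepWeight (-(X + 1)) (c - 1) 0 * stepWeight (-X) 0 a) =
    contactWeight 0 c * (stepWeight (-X) 0 a * stepWeight X c d) := by
  rw [crossProb_mul_contactWeight]
  obtain rfl | rfl | rfl | hc : c = 0 ∨ c = 1 ∨ c = 2 ∨ 3 ≤ c := by omega
  · rw [show contactWeight 0 0 = 1 by norm_num [contactWeight], zero_sub]
    obtain hX | hX : X < 0 ∨ 0 < X := by omega
    · have h : stepWeight (X - 1) (-1) 0 = 0 := by rw [stepWeight_neg_one, if_neg (by omega)]
      simp only [h, stepWeight_neg_one, stepWeight_zero, hX.not_ge, Int.neg_nonneg, hX.le,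
        if_true, if_false, and_true, true_and]
      split_ifs <;> first | omega | simp
    · have h : stepWeight (-(X + 1)) (-1) 0 = 0 := by rw [stepWeight_neg_one, if_neg (by omega)]
      simp only [h, stepWeight_neg_one, stepWeight_zero, hX.le, Int.neg_nonneg, hX.not_ge,
        if_true, if_false, and_true, true_and]
      split_ifs <;> first | omega | simp
  · have h : stepWeight (-(X + 1)) 0 0 = 0 := by
      rw [stepWeight_zero, if_neg]
      rintro ⟨-, h⟩
      split_ifs at h
      omega
    rw [sub_self, h, stepWeight_neg_one, show contactWeight 0 1 = 0 by norm_num [contactWeight]]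
    simp
  · have h : stepWeight (X - 1) (-1) 2 = 0 := by rw [stepWeight_neg_one, if_neg (by omega)]
    rw [show contactWeight 0 2 = 1 / 2 by norm_num [contactWeight], h,
      stepWeight_of_one_le one_le_two, stepWeight_of_one_le (show (1 : ℤ) ≤ 2 - 1 by norm_num)]
    by_cases hX : 2 ∣ X
    · split_ifs <;> first | omega | ring
    · simp [stepWeight_zero, hX]
  · have h : contactWeight 0 c = 0 := by
      unfold contactWeight; split_ifs <;> first | rfl | omega
    have h₁ : stepWeight (X - 1) (-1) c = 0 := by rw [stepWeight_neg_one, if_neg (by omega)]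
    have h₂ : stepWeight (-(X + 1)) (c - 1) 0 = 0 := by
      rw [stepWeight_of_one_le (by omega), if_neg (by omega)]
    rw [h, h₁, h₂]
    ring

private lemma backward_identity_of_le {X a b c d : ℤ} (hb : b ≤ 0) (hbc : b ≤ c)
    (h0 : ¬ (X = 0 ∧ b = 0 ∧ c = 0)) :
    crossProb a (b - 1) * contactWeight a (b - 1) *
        (stepWeight (X - 1) (b - 1) c * stepWeight X c d) +
      crossProb d (c - 1) * contactWeight d (c - 1) *
        (stepWeight (-(X + 1)) (c - 1) b * stepWeight (-X) b a) =
    contactWeight b c * (stepWeight (-X) b a * stepWeight X c d) := by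
  rw [crossProb_mul_contactWeight a b, if_neg (by omega)]
  obtain hb | rfl | rfl : b < -1 ∨ b = -1 ∨ b = 0 := by omega
  · simp [stepWeight_of_lt_neg_one hb, hb.trans_le (by norm_num : (-1 : ℤ) ≤ 0) |>.ne]
  · simpa using backward_identity_of_eq_neg_one
  · simpa using backward_identity_of_eq_zero hbc (by omega)

/-- The walker sits at `X` with edge local times `…, a, b | c, d, …`. The two terms on the left
correspond to its arrival from `X - 1` and from `X + 1`. -/
lemma backward_identity {X a b c d : ℤ} (h0 : ¬ (X = 0 ∧ b = 0 ∧ c = 0)) :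
    crossProb a (b - 1) * contactWeight a (b - 1) *
        (stepWeight (X - 1) (b - 1) c * stepWeight X c d) +
      crossProb d (c - 1) * contactWeight d (c - 1) *
        (stepWeight (-(X + 1)) (c - 1) b * stepWeight (-X) b a) =
    contactWeight b c * (stepWeight (-X) b a * stepWeight X c d) := by
  by_cases hb : 1 ≤ b
  · by_cases hc : 1 ≤ c
    · exact backward_identity_of_one_le hb hc
    · have h := backward_identity_of_le (X := -X) (a := d) (b := c) (c := b) (d := a)
        (by omega) (by omega) (by omega)
      rw [neg_neg, contactWeight_comm c b, show -(-X + 1) = X - 1 by ring,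
        show -X - 1 = -(X + 1) by ring] at h
      linarith
  · obtain hbc | hcb := le_total b c
    · exact backward_identity_of_le (by omega) hbc h0
    · have h := backward_identity_of_le (X := -X) (a := d) (b := c) (c := b) (d := a)
        (by omega) hcb (by omega)
      rw [neg_neg, contactWeight_comm c b, show -(-X + 1) = X - 1 by ring,
        show -X - 1 = -(X + 1) by ring] at h
      linarith

/-! ### The weight of a state -/

section StateWeight

/-- The factor of the edge `i` in the weight of the state `(X, l)`. -/
noncomputable def edgeWeight (X : ℤ) (l : ℤ → ℤ) (i : ℤ) : ℝ :=
  if X ≤ i then stepWeight i (l i) (l (i + 1)) else stepWeight (-(i + 1)) (l i) (l (i - 1))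

/-- The weight of the state `(X, l)`, which turns out to be its probability at time
`addedLocalTime l`. -/
noncomputable def stateWeight (X : ℤ) (l : ℤ → ℤ) : ℝ :=
  contactWeight (l (X - 1)) (l X) * ∏ᶠ i, edgeWeight X l i

/-- The local times before the last crossing of the edge `i`. -/
def uncross (l : ℤ → ℤ) (i : ℤ) : ℤ → ℤ := Function.update l i (l i - 1)

@[simp] lemma uncross_self (l : ℤ → ℤ) (i : ℤ) : uncross l i i = l i - 1 := by simp [uncross]

lemma uncross_of_ne (l : ℤ → ℤ) {i j : ℤ} (h : j ≠ i) : uncross l i j = l j := by simp [uncross, h]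

lemma uncross_eventuallyEq {l a : ℤ → ℤ} (h : l =ᶠ[cofinite] a) (i : ℤ) :
    uncross l i =ᶠ[cofinite] a := by
  filter_upwards [h, (finite_singleton i).compl_mem_cofinite] with j hj hji
  rw [uncross_of_ne l hji, hj]

lemma eventually_cofinite_add {p : ℤ → Prop} (h : ∀ᶠ i in cofinite, p i) (k : ℤ) :
    ∀ᶠ i in cofinite, p (i + k) :=
  (add_left_injective k).tendsto_cofinite.eventually h

lemma aInit_eq (i : ℤ) : aInit i = if 2 ∣ (if 0 ≤ i then i else i + 1) then 0 else -1 := by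
  unfold aInit
  simp only [even_iff_two_dvd]
  split_ifs <;> first | rfl | omega

lemma edgeWeight_aInit {X i : ℤ} (h : X ≤ i ↔ 0 ≤ i) : edgeWeight X aInit i = 1 := by
  unfold edgeWeight
  simp only [aInit_eq]
  split_ifs <;> first | omega | (simp only [stepWeight_zero, stepWeight_neg_one]; grind)

lemma hasFiniteMulSupport_edgeWeight (X : ℤ) {l : ℤ → ℤ} (h : l =ᶠ[cofinite] aInit) :
    (edgeWeight X l).HasFiniteMulSupport := by
  refine eventually_cofinite.1 ?_
  filter_upwards [h, eventually_cofinite_add h 1, eventually_cofinite_add h (-1),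
    (finite_Icc (min 0 X) (max 0 X)).compl_mem_cofinite] with i h₀ h₁ h₂ hi
  have hi : X ≤ i ↔ 0 ≤ i := by
    rw [mem_compl_iff, mem_Icc] at hi
    omega
  rw [← edgeWeight_aInit hi, edgeWeight, edgeWeight, h₀, h₁, sub_eq_add_neg i 1, h₂]

lemma edgeWeight_nonneg (X : ℤ) (l : ℤ → ℤ) (i : ℤ) : 0 ≤ edgeWeight X l i := by
  unfold edgeWeight
  split_ifs <;> exact stepWeight_nonneg _ _ _

lemma stateWeight_nonneg (X : ℤ) (l : ℤ → ℤ) : 0 ≤ stateWeight X l :=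
  mul_nonneg (contactWeight_nonneg _ _) (finprod_nonneg (edgeWeight_nonneg X l))

lemma finprod_eq_mul_finprod_compl_pair {F : ℤ → ℝ} (hF : F.HasFiniteMulSupport) {a b : ℤ}
    (hab : a ≠ b) : ∏ᶠ i, F i = F a * F b * ∏ᶠ i ∈ ({a, b} : Set ℤ)ᶜ, F i := by
  rw [← finprod_mem_pair hab, compl_eq_univ_sdiff,
    finprod_mem_mul_sdiff' (subset_univ _) (hF.inter_of_right _), finprod_mem_univ]

section Recursion

variable (X : ℤ) {l : ℤ → ℤ} (hl : l =ᶠ[cofinite] aInit)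

include hl

private lemma stateWeight_eq :
    stateWeight X l = contactWeight (l (X - 1)) (l X) *
      (stepWeight (-X) (l (X - 1)) (l (X - 2)) * stepWeight X (l X) (l (X + 1))) *
      ∏ᶠ i ∈ ({X - 1, X} : Set ℤ)ᶜ, edgeWeight X l i := by
  have h₁ : edgeWeight X l (X - 1) = stepWeight (-X) (l (X - 1)) (l (X - 2)) := by
    rw [edgeWeight, if_neg (by omega)]
    ring_nf
  have h₂ : edgeWeight X l X = stepWeight X (l X) (l (X + 1)) := if_pos le_rfl
  rw [stateWeight, finprod_eq_mul_finprod_compl_pair (hasFiniteMulSupport_edgeWeight X hl)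
    (show X - 1 ≠ X by omega), h₁, h₂]
  ring

omit hl in
private lemma finprod_edgeWeight_uncross {Y j : ℤ} (hY : Y = X - 1 ∨ Y = X + 1)
    (hj : j = X - 1 ∨ j = X) :
    ∏ᶠ i ∈ ({X - 1, X} : Set ℤ)ᶜ, edgeWeight Y (uncross l j) i =
      ∏ᶠ i ∈ ({X - 1, X} : Set ℤ)ᶜ, edgeWeight X l i := by
  refine finprod_mem_congr rfl fun i hi => ?_
  obtain ⟨h₁, h₂⟩ : i ≠ X - 1 ∧ i ≠ X := by simpa using hi
  unfold edgeWeight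
  by_cases hXi : X ≤ i
  · rw [if_pos (by omega), if_pos hXi, uncross_of_ne _ (by omega), uncross_of_ne _ (by omega)]
  · rw [if_neg (by omega), if_neg hXi, uncross_of_ne _ (by omega), uncross_of_ne _ (by omega)]

private lemma stateWeight_uncross_left :
    stateWeight (X - 1) (uncross l (X - 1)) = contactWeight (l (X - 2)) (l (X - 1) - 1) *
      (stepWeight (X - 1) (l (X - 1) - 1) (l X) * stepWeight X (l X) (l (X + 1))) *
      ∏ᶠ i ∈ ({X - 1, X} : Set ℤ)ᶜ, edgeWeight X l i := by
  have h₁ : edgeWeight (X - 1) (uncross l (X - 1)) (X - 1) =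
      stepWeight (X - 1) (l (X - 1) - 1) (l X) := by
    rw [edgeWeight, if_pos le_rfl, uncross_self, sub_add_cancel, uncross_of_ne _ (by omega)]
  have h₂ : edgeWeight (X - 1) (uncross l (X - 1)) X = stepWeight X (l X) (l (X + 1)) := by
    rw [edgeWeight, if_pos (by omega), uncross_of_ne _ (by omega), uncross_of_ne _ (by omega)]
  rw [stateWeight, finprod_eq_mul_finprod_compl_pair
    (hasFiniteMulSupport_edgeWeight _ (uncross_eventuallyEq hl _)) (show X - 1 ≠ X by omega),
    h₁, h₂, finprod_edgeWeight_uncross X (.inl rfl) (.inl rfl), uncross_self,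
    uncross_of_ne _ (by omega), show X - 1 - 1 = X - 2 by ring]
  ring

private lemma stateWeight_uncross_right :
    stateWeight (X + 1) (uncross l X) = contactWeight (l (X + 1)) (l X - 1) *
      (stepWeight (-(X + 1)) (l X - 1) (l (X - 1)) * stepWeight (-X) (l (X - 1)) (l (X - 2))) *
      ∏ᶠ i ∈ ({X - 1, X} : Set ℤ)ᶜ, edgeWeight X l i := by
  have h₁ : edgeWeight (X + 1) (uncross l X) (X - 1) =
      stepWeight (-X) (l (X - 1)) (l (X - 2)) := by
    rw [edgeWeight, if_neg (by omega), uncross_of_ne _ (by omega), uncross_of_ne _ (by omega)]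
    ring_nf
  have h₂ : edgeWeight (X + 1) (uncross l X) X = stepWeight (-(X + 1)) (l X - 1) (l (X - 1)) := by
    rw [edgeWeight, if_neg (by omega), uncross_self, uncross_of_ne _ (by omega)]
  rw [stateWeight, finprod_eq_mul_finprod_compl_pair
    (hasFiniteMulSupport_edgeWeight _ (uncross_eventuallyEq hl _)) (show X - 1 ≠ X by omega),
    h₁, h₂, finprod_edgeWeight_uncross X (.inr rfl) (.inr rfl), add_sub_cancel_right, uncross_self,
    uncross_of_ne _ (by omega), contactWeight_comm]
  ring

lemma stateWeight_recursion :
    crossProb (l (X - 2)) (l (X - 1) - 1) * stateWeight (X - 1) (uncross l (X - 1)) +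
      crossProb (l (X + 1)) (l X - 1) * stateWeight (X + 1) (uncross l X) =
    if X = 0 ∧ l (X - 1) = 0 ∧ l X = 0 then 0 else stateWeight X l := by
  rw [stateWeight_uncross_left X hl, stateWeight_uncross_right X hl]
  split_ifs with h₀
  · obtain ⟨rfl, h₁, h₂⟩ := h₀
    rw [h₁, h₂, show (0 : ℤ) - 1 = -1 from rfl, stepWeight_neg_one, stepWeight_neg_one,
      if_neg (by omega), if_neg (by omega)]
    ring
  · rw [stateWeight_eq X hl]
    linear_combination (∏ᶠ i ∈ ({X - 1, X} : Set ℤ)ᶜ, edgeWeight X l i) *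
      backward_identity (a := l (X - 2)) (d := l (X + 1)) h₀

end Recursion

/-! ### Profiles of positive weight -/

variable {X : ℤ} {l : ℤ → ℤ}

lemma edgeWeight_ne_zero (hl : l =ᶠ[cofinite] aInit) (h : stateWeight X l ≠ 0) (i : ℤ) :
    edgeWeight X l i ≠ 0 := fun hi =>
  right_ne_zero_of_mul h (finprod_eq_zero _ i hi (hasFiniteMulSupport_edgeWeight X hl))

lemma isStep_right (hl : l =ᶠ[cofinite] aInit) (h : stateWeight X l ≠ 0) {i : ℤ} (hi : X ≤ i) :
    IsStep i (l i) (l (i + 1)) := by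
  have := edgeWeight_ne_zero hl h i
  rwa [edgeWeight, if_pos hi, stepWeight_ne_zero_iff] at this

lemma isStep_left (hl : l =ᶠ[cofinite] aInit) (h : stateWeight X l ≠ 0) {i : ℤ} (hi : i < X) :
    IsStep (-(i + 1)) (l i) (l (i - 1)) := by
  have := edgeWeight_ne_zero hl h i
  rwa [edgeWeight, if_neg hi.not_ge, stepWeight_ne_zero_iff] at this

lemma aInit_le (hl : l =ᶠ[cofinite] aInit) (h : stateWeight X l ≠ 0) (i : ℤ) : aInit i ≤ l i := by
  rw [aInit_eq]
  rcases le_or_gt X i with hi | hi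
  · obtain ⟨h₁, h₂, -, -, -, h₃⟩ := isStep_right hl h hi
    split_ifs <;> omega
  · obtain ⟨h₁, h₂, -, -, -, h₃⟩ := isStep_left hl h hi
    split_ifs <;> omega

lemma eq_aInit_of_zero (hl : l =ᶠ[cofinite] aInit) (h : stateWeight 0 l ≠ 0) (h₁ : l (0 - 1) = 0)
    (h₂ : l 0 = 0) : l = aInit := by
  have hright (i : ℤ) (hi : 0 ≤ i) : l i = aInit i := by
    induction i, hi using Int.leInduction with
    | base => rw [h₂, aInit_eq]; rfl
    | succ i hi ih =>
      obtain ⟨-, -, h₃, h₄, -, h₅⟩ := isStep_right hl h hi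
      rw [aInit_eq] at ih ⊢
      split_ifs at ih ⊢ <;> omega
  have hleft (i : ℤ) (hi : i ≤ 0 - 1) : l i = aInit i := by
    induction i, hi using Int.leInductionDown with
    | base => rw [h₁, aInit_eq]; rfl
    | pred i hi ih =>
      obtain ⟨-, -, h₃, h₄, -, h₅⟩ := isStep_left hl h (by omega : i < 0)
      rw [aInit_eq] at ih ⊢
      split_ifs at ih ⊢ <;> omega
  funext i
  rcases le_or_gt 0 i with hi | hi
  exacts [hright i hi, hleft i (by omega)]

lemma stateWeight_zero_aInit : stateWeight 0 aInit = 1 := by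
  simp [stateWeight, edgeWeight_aInit, contactWeight, aInit]

lemma stateWeight_aInit_of_ne (hX : X ≠ 0) : stateWeight X aInit = 0 := by
  have : contactWeight (aInit (X - 1)) (aInit X) = 0 := by
    by_contra h
    have := contactWeight_ne_zero h
    have h₁ := aInit_eq (X - 1)
    have h₂ := aInit_eq X
    split_ifs at h₁ h₂ <;> omega
  rw [stateWeight, this, zero_mul]

/-! ### The total local time -/

lemma finsum_sub_finsum_of_eqOn_compl {F G : ℤ → ℤ} (hF : F.HasFiniteSupport) {a : ℤ}
    (h : ∀ i ≠ a, F i = G i) : ∑ᶠ i, F i - ∑ᶠ i, G i = F a - G a := by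
  have hG : G.HasFiniteSupport := by
    refine (hF.union (finite_singleton a)).subset fun i hi => ?_
    by_contra! hc
    exact hi ((h i fun hia => hc (.inr hia)) ▸ by simpa using fun hF => hc (.inl hF))
  rw [← add_finsum_cond_ne a hF, ← add_finsum_cond_ne a hG,
    finsum_congr fun i => finsum_congr_Prop rfl fun hi => h i hi]
  ring

/-- The number of edge crossings that lead from the initial profile to `l`. -/
noncomputable def addedLocalTime (l : ℤ → ℤ) : ℤ := ∑ᶠ i, (l i - aInit i)

lemma hasFiniteSupport_sub_aInit (hl : l =ᶠ[cofinite] aInit) :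
    (fun i => l i - aInit i).HasFiniteSupport :=
  eventually_cofinite.1 (hl.mono fun _ hi => sub_eq_zero.2 hi)

lemma addedLocalTime_uncross (hl : l =ᶠ[cofinite] aInit) (i : ℤ) :
    addedLocalTime (uncross l i) = addedLocalTime l - 1 := by
  have := finsum_sub_finsum_of_eqOn_compl (G := fun j => uncross l i j - aInit j)
    (hasFiniteSupport_sub_aInit hl) (a := i) fun j hj => by rw [uncross_of_ne l hj]
  rw [uncross_self] at this
  unfold addedLocalTime
  omega

lemma eq_aInit_of_addedLocalTime_eq_zero (hl : l =ᶠ[cofinite] aInit) (h : stateWeight X l ≠ 0)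
    (h₀ : addedLocalTime l = 0) : l = aInit := by
  have hfin := hasFiniteSupport_sub_aInit hl
  rw [addedLocalTime, finsum_eq_sum _ hfin, Finset.sum_eq_zero_iff_of_nonneg
    fun i _ => sub_nonneg.2 (aInit_le hl h i)] at h₀
  funext i
  by_contra hi
  exact hi (sub_eq_zero.1 (h₀ i (hfin.mem_toFinset.2 fun h => hi (sub_eq_zero.1 h))))

end StateWeight

/-! ### Reachable states -/

section ReachableStates

variable {ε : ℕ → ℤ} {s : SRWState} {X : ℤ} {l : ℤ → ℤ}

lemma srwStep_of_right
    (h : s.loc s.pos < s.loc (s.pos - 1) ∨ s.loc (s.pos - 1) = s.loc s.pos ∧ ε s.coins = 1) :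
    (srwStep ε s).pos = s.pos + 1 ∧
      (srwStep ε s).loc = Function.update s.loc s.pos (s.loc s.pos + 1) := by
  have hpos : (srwStep ε s).pos = s.pos + 1 := by
    simp only [srwStep]
    split_ifs <;> omega
  refine ⟨hpos, funext fun i => ?_⟩
  change (if i = min s.pos (srwStep ε s).pos then s.loc i + 1 else s.loc i) = _
  rw [hpos, min_eq_left (by omega), Function.update_apply]
  split_ifs with hi
  exacts [by rw [hi], rfl]

lemma srwStep_of_left
    (h : s.loc (s.pos - 1) < s.loc s.pos ∨ s.loc s.pos = s.loc (s.pos - 1) ∧ ε s.coins = -1) :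
    (srwStep ε s).pos = s.pos - 1 ∧
      (srwStep ε s).loc = Function.update s.loc (s.pos - 1) (s.loc (s.pos - 1) + 1) := by
  have hpos : (srwStep ε s).pos = s.pos - 1 := by
    simp only [srwStep]
    split_ifs <;> omega
  refine ⟨hpos, funext fun i => ?_⟩
  change (if i = min s.pos (srwStep ε s).pos then s.loc i + 1 else s.loc i) = _
  rw [hpos, min_eq_right (by omega), Function.update_apply]
  split_ifs with hi
  exacts [by rw [hi], rfl]

lemma coins_srwStep (ε : ℕ → ℤ) (s : SRWState) :
    (srwStep ε s).coins = if s.loc (s.pos - 1) = s.loc s.pos then s.coins + 1 else s.coins := rfl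

lemma uncross_update (m : ℤ → ℤ) (i : ℤ) : uncross (Function.update m i (m i + 1)) i = m := by
  simp [uncross]

lemma update_uncross (l : ℤ → ℤ) (i : ℤ) :
    Function.update (uncross l i) i (uncross l i i + 1) = l := by
  simp [uncross]

lemma srwStep_eq_iff (hε : ∀ j, ε j = 1 ∨ ε j = -1) :
    (srwStep ε s).pos = X ∧ (srwStep ε s).loc = l ↔
      (s.pos = X - 1 ∧ s.loc = uncross l (X - 1)) ∧
        (l (X - 1) - 1 < l (X - 2) ∨ l (X - 2) = l (X - 1) - 1 ∧ ε s.coins = 1) ∨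
      (s.pos = X + 1 ∧ s.loc = uncross l X) ∧
        (l X - 1 < l (X + 1) ∨ l (X + 1) = l X - 1 ∧ ε s.coins = -1) := by
  constructor
  · rintro ⟨rfl, rfl⟩
    by_cases hR : s.loc s.pos < s.loc (s.pos - 1) ∨ s.loc (s.pos - 1) = s.loc s.pos ∧ ε s.coins = 1
    · obtain ⟨hpos, hloc⟩ := srwStep_of_right hR
      rw [hpos, hloc, add_sub_cancel_right, uncross_update, Function.update_self,
        Function.update_of_ne (by omega), show s.pos + 1 - 2 = s.pos - 1 by ring]
      exact .inl ⟨⟨rfl, rfl⟩, by omega⟩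
    · have hL : s.loc (s.pos - 1) < s.loc s.pos ∨
          s.loc s.pos = s.loc (s.pos - 1) ∧ ε s.coins = -1 := by
        have := hε s.coins
        omega
      obtain ⟨hpos, hloc⟩ := srwStep_of_left hL
      rw [hpos, hloc, sub_add_cancel, uncross_update, Function.update_self,
        Function.update_of_ne (by omega : s.pos ≠ s.pos - 1)]
      exact .inr ⟨⟨rfl, rfl⟩, by omega⟩
  · rintro (⟨⟨hX, hl⟩, h⟩ | ⟨⟨hX, hl⟩, h⟩)
    · obtain ⟨hpos, hloc⟩ := srwStep_of_right (ε := ε) (s := s) (by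
        rw [hX, hl, uncross_self, uncross_of_ne _ (by omega), show X - 1 - 1 = X - 2 by ring]
        omega)
      exact ⟨by omega, by rw [hloc, hX, hl, update_uncross]⟩
    · obtain ⟨hpos, hloc⟩ := srwStep_of_left (ε := ε) (s := s) (by
        rw [hX, hl, add_sub_cancel_right, uncross_self, uncross_of_ne _ (by omega)]
        omega)
      exact ⟨by omega, by rw [hloc, hX, hl, add_sub_cancel_right, update_uncross]⟩

lemma srw_loc_eventuallyEq (ε : ℕ → ℤ) (n : ℕ) : (srw ε n).loc =ᶠ[cofinite] aInit := by
  induction n with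
  | zero => exact .rfl
  | succ n ih =>
    filter_upwards [ih, (finite_singleton
      (min (srw ε n).pos (srw ε (n + 1)).pos)).compl_mem_cofinite] with i hi hne
    exact (if_neg hne).trans hi

section Deterministic

variable (hε : ∀ j, ε j = 1 ∨ ε j = -1)

include hε

lemma srw_succ_cases (n : ℕ) (hX : (srw ε (n + 1)).pos = X) (hl : (srw ε (n + 1)).loc = l) :
    ((srw ε n).pos = X - 1 ∧ (srw ε n).loc = uncross l (X - 1)) ∧ l (X - 1) - 1 ≤ l (X - 2) ∨
      ((srw ε n).pos = X + 1 ∧ (srw ε n).loc = uncross l X) ∧ l X - 1 ≤ l (X + 1) := by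
  exact ((srwStep_eq_iff hε (s := srw ε n)).1 ⟨hX, hl⟩).imp
    (And.imp_right fun h => by omega) (And.imp_right fun h => by omega)

/-- The weight of a visited state is at least the weight of its predecessor times a positive
crossing probability. -/
lemma stateWeight_srw_ne_zero (n : ℕ) : stateWeight (srw ε n).pos (srw ε n).loc ≠ 0 := by
  induction n with
  | zero => simp [srw, stateWeight_zero_aInit]
  | succ n ih =>
    generalize hX : (srw ε (n + 1)).pos = X
    generalize hl : (srw ε (n + 1)).loc = l
    have hla : l =ᶠ[cofinite] aInit := hl ▸ srw_loc_eventuallyEq ε (n + 1)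
    have hpos : 0 < crossProb (l (X - 2)) (l (X - 1) - 1) * stateWeight (X - 1) (uncross l (X - 1))
        + crossProb (l (X + 1)) (l X - 1) * stateWeight (X + 1) (uncross l X) := by
      have h₀ := (stateWeight_nonneg (srw ε n).pos (srw ε n).loc).lt_of_ne' ih
      rcases srw_succ_cases hε n hX hl with ⟨⟨hY, hm⟩, hc⟩ | ⟨⟨hY, hm⟩, hc⟩ <;> rw [hY, hm] at h₀
      · exact add_pos_of_pos_of_nonneg (mul_pos (crossProb_pos hc) h₀)
          (mul_nonneg (crossProb_nonneg _ _) (stateWeight_nonneg _ _))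
      · exact add_pos_of_nonneg_of_pos
          (mul_nonneg (crossProb_nonneg _ _) (stateWeight_nonneg _ _))
          (mul_pos (crossProb_pos hc) h₀)
    rw [stateWeight_recursion X hla] at hpos
    split_ifs at hpos
    exacts [absurd hpos (lt_irrefl _), hpos.ne']

lemma addedLocalTime_srw (n : ℕ) : addedLocalTime (srw ε n).loc = n := by
  induction n with
  | zero => simp [srw, addedLocalTime]
  | succ n ih =>
    have hla := srw_loc_eventuallyEq ε (n + 1)
    push_cast
    rcases srw_succ_cases hε n rfl rfl with ⟨⟨-, hm⟩, -⟩ | ⟨⟨-, hm⟩, -⟩ <;>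
      rw [← ih, hm, addedLocalTime_uncross hla] <;> ring

lemma contact_srw (n : ℕ) (hX : (srw ε n).pos = X) (hl : (srw ε n).loc = l) :
    -1 ≤ min (l (X - 1)) (l X) ∧
      (l (X - 1) = l X ∧ 0 ≤ l X ∨ l (X - 1) = l X + 2 ∨ l X = l (X - 1) + 2) ∧
      (l (X + 1) = l X + 1 ∨ l (X + 1) = l X - 1) ∧
      (l (X - 2) = l (X - 1) + 1 ∨ l (X - 2) = l (X - 1) - 1) := by
  have hla : l =ᶠ[cofinite] aInit := hl ▸ srw_loc_eventuallyEq ε n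
  have h : stateWeight X l ≠ 0 := hX ▸ hl ▸ stateWeight_srw_ne_zero hε n
  have h₁ := contactWeight_ne_zero (left_ne_zero_of_mul h)
  have h₂ := (isStep_left hla h (show X - 1 < X by omega)).adjacent
  rw [show X - 1 - 1 = X - 2 by ring] at h₂
  exact ⟨h₁.1, by omega, (isStep_right hla h le_rfl).adjacent, h₂⟩

/-- The number of coins used up to a visit of the state `(X, l)`. -/
noncomputable def coinsOf (X : ℤ) (l : ℤ → ℤ) : ℤ :=
  ∑ᶠ i, (l i + 1) / 2 + max (l (X - 1)) (l X) / 2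

omit hε in
lemma finsum_half_sub_finsum_half_uncross (hl : l =ᶠ[cofinite] aInit) (i : ℤ) :
    ∑ᶠ j, (l j + 1) / 2 - ∑ᶠ j, (uncross l i j + 1) / 2 = (l i + 1) / 2 - l i / 2 := by
  have hfin : (fun j => (l j + 1) / 2).HasFiniteSupport :=
    eventually_cofinite.1 <| hl.mono fun j hj => by
      change (l j + 1) / 2 = 0
      rw [hj, aInit_eq]
      split_ifs <;> rfl
  have := finsum_sub_finsum_of_eqOn_compl (G := fun j => (uncross l i j + 1) / 2) hfin (a := i)
    fun j hj => by rw [uncross_of_ne l hj]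
  simpa using this

lemma coins_srw (n : ℕ) : ((srw ε n).coins : ℤ) = coinsOf (srw ε n).pos (srw ε n).loc := by
  induction n with
  | zero =>
    have h (i : ℤ) : (aInit i + 1) / 2 = 0 := by rw [aInit_eq]; split_ifs <;> rfl
    simp only [srw, coinsOf, h, finsum_zero]; decide
  | succ n ih =>
    have hcoins := coins_srwStep ε (srw ε n)
    generalize hX : (srw ε (n + 1)).pos = X
    generalize hl : (srw ε (n + 1)).loc = l
    have hla : l =ᶠ[cofinite] aInit := hl ▸ srw_loc_eventuallyEq ε (n + 1)
    have hcases := srw_succ_cases hε n hX hl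
    change (srw ε (n + 1)).coins = _ at hcoins
    rw [hcoins]
    unfold coinsOf at *
    rcases hcases with ⟨⟨hY, hm⟩, hc⟩ | ⟨⟨hY, hm⟩, hc⟩
    · have hold := contact_srw hε n hY hm
      have hsum := finsum_half_sub_finsum_half_uncross hla (X - 1)
      simp only [hY, hm, sub_sub, one_add_one_eq_two, sub_add_cancel, uncross_self,
        uncross_of_ne l (show X ≠ X - 1 by omega), uncross_of_ne l (show X - 2 ≠ X - 1 by omega)]
        at ih hold ⊢
      push_cast
      split_ifs <;> omega
    · have hold := contact_srw hε n hY hm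
      have hsum := finsum_half_sub_finsum_half_uncross hla X
      simp only [hY, hm, add_sub_cancel_right, uncross_self,
        uncross_of_ne l (show X + 1 ≠ X by omega), show X + 1 - 2 = X - 1 by ring,
        uncross_of_ne l (show X - 1 ≠ X by omega)] at ih hold ⊢
      push_cast
      split_ifs <;> omega

/-! ### Equality times -/

/-- Between equality times the walker descends along its local time profile, which is bounded
below. -/
lemma exists_isEqTime_ge (n : ℕ) : ∃ m ≥ n, IsEqTime ε m := by
  by_contra! h
  have hdescent (k : ℕ) :
      min (ellMinus ε (n + k)) (ellPlus ε (n + k)) ≤ min (ellMinus ε n) (ellPlus ε n) - k := by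
    induction k with
    | zero => simp
    | succ k ih =>
      refine le_trans (?_ : _ ≤ min (ellMinus ε (n + k)) (ellPlus ε (n + k)) - 1)
        (by push_cast; omega)
      have h₁ := h (n + k) (by omega)
      have h₂ := h (n + k + 1) (by omega)
      unfold IsEqTime ellMinus ellPlus ellEdge Xwalk at *
      rw [← add_assoc]
      generalize hX : (srw ε (n + k + 1)).pos = X at *
      generalize hl : (srw ε (n + k + 1)).loc = l at *
      have hnew := contact_srw hε _ hX hl
      rcases srw_succ_cases hε _ hX hl with ⟨⟨hY, hm⟩, hc⟩ | ⟨⟨hY, hm⟩, hc⟩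
      · have hold := contact_srw hε _ hY hm
        simp only [hY, hm, sub_sub, one_add_one_eq_two, sub_add_cancel, uncross_self,
          uncross_of_ne l (show X ≠ X - 1 by omega), uncross_of_ne l (show X - 2 ≠ X - 1 by omega)]
          at h₁ hold ⊢
        omega
      · have hold := contact_srw hε _ hY hm
        simp only [hY, hm, add_sub_cancel_right, uncross_self,
          uncross_of_ne l (show X + 1 ≠ X by omega), show X + 1 - 2 = X - 1 by ring,
          uncross_of_ne l (show X - 1 ≠ X by omega)] at h₁ hold ⊢
        omega
  have hlow (k : ℕ) := (contact_srw hε k rfl rfl).1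
  have := hdescent ((min (ellMinus ε n) (ellPlus ε n)).toNat + 2)
  have := hlow (n + ((min (ellMinus ε n) (ellPlus ε n)).toNat + 2))
  unfold ellMinus ellPlus ellEdge Xwalk at *
  push_cast at *
  omega

lemma infinite_isEqTime : {n | IsEqTime ε n}.Infinite :=
  Nat.frequently_atTop_iff_infinite.1 <|
    frequently_atTop.2 (exists_isEqTime_ge hε)

lemma isEqTime_timeN (k : ℕ) : IsEqTime ε (timeN ε k) :=
  Nat.nth_mem_of_infinite (infinite_isEqTime hε) k

end Deterministic

open Classical in
lemma coins_srw_eq_count (ε : ℕ → ℤ) (n : ℕ) : (srw ε n).coins = Nat.count (IsEqTime ε) n := by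
  induction n with
  | zero => simp [srw]
  | succ n ih =>
    rw [Nat.count_succ, ← ih]
    change (srwStep ε (srw ε n)).coins = _
    rw [coins_srwStep, IsEqTime, ellMinus, ellPlus, ellEdge, ellEdge, Xwalk]
    split_ifs <;> rfl

lemma eq_timeN_iff (hε : ∀ j, ε j = 1 ∨ ε j = -1) {n k : ℕ} :
    n = timeN ε k ↔ IsEqTime ε n ∧ (srw ε n).coins = k := by
  classical
  constructor
  · rintro rfl
    exact ⟨isEqTime_timeN hε k,
      (coins_srw_eq_count ε _).trans (Nat.count_nth_of_infinite (infinite_isEqTime hε) k)⟩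
  · rintro ⟨hn, rfl⟩
    rw [coins_srw_eq_count, timeN, Nat.nth_count hn]

end ReachableStates

/-! ### Fair coins -/

section FairCoins

/-- The coordinates are independent and uniform under `P`. -/
def IsFairCoins (P : Measure (ℕ → Bool)) : Prop :=
  ∀ (s : Finset ℕ) (b : ℕ → Bool), P {ω | ∀ j ∈ s, ω j = b j} = (1 / 2 : ENNReal) ^ s.card

lemma coin_eq_one_or (ω : ℕ → Bool) (j : ℕ) : coin ω j = 1 ∨ coin ω j = -1 := by
  unfold coin; split_ifs <;> simp

lemma preimage_restrict_image_of_dependsOn {j : ℕ} {S : Set (ℕ → Bool)}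
    (hS : DependsOn (· ∈ S) (Iio j)) :
    (fun ω (i : Fin j) => ω i) ⁻¹' ((fun ω (i : Fin j) => ω i) '' S) = S := by
  refine (subset_preimage_image _ _).antisymm' ?_
  rintro ω ⟨η, hη, h⟩
  exact (hS fun i hi => congrFun h ⟨i, hi⟩).mp hη

lemma measurableSet_of_dependsOn {j : ℕ} {S : Set (ℕ → Bool)} (hS : DependsOn (· ∈ S) (Iio j)) :
    MeasurableSet S := by
  rw [← preimage_restrict_image_of_dependsOn hS]
  exact (by fun_prop : Measurable fun (ω : ℕ → Bool) (i : Fin j) => ω i) (toFinite _).measurableSet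

namespace IsFairCoins

variable {P : Measure (ℕ → Bool)} (hP : IsFairCoins P)

include hP

lemma measure_coin (j : ℕ) (b : Bool) : P {ω | ω j = b} = 1 / 2 := by
  simpa using hP {j} fun _ => b

lemma indepFun_restrict_coin [IsProbabilityMeasure P] (j : ℕ) :
    ProbabilityTheory.IndepFun (fun ω (i : Fin j) => ω i) (fun ω => ω j) P := by
  have hpast : Measurable fun (ω : ℕ → Bool) (i : Fin j) => ω i := by fun_prop
  have hcoin : Measurable fun ω : ℕ → Bool => ω j := by fun_prop
  rw [ProbabilityTheory.indepFun_iff_map_prod_eq_prod_map_map hpast.aemeasurable hcoin.aemeasurable]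
  refine Measure.ext_of_singleton fun ⟨v, b⟩ => ?_
  set w : ℕ → Bool := fun i => if h : i < j then v ⟨i, h⟩ else b
  have hv : (fun (ω : ℕ → Bool) (i : Fin j) => ω i) ⁻¹' {v} =
      {ω | ∀ i ∈ Finset.range j, ω i = w i} := by
    ext ω
    simp +contextual [funext_iff, w, Fin.forall_iff]
  have hvb : (fun ω : ℕ → Bool => ((fun i : Fin j => ω i), ω j)) ⁻¹' {(v, b)} =
      {ω | ∀ i ∈ Finset.range (j + 1), ω i = w i} := by
    rw [← singleton_prod_singleton, mk_preimage_prod, hv]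
    ext ω
    simp [Finset.range_add_one, w, and_comm]
  rw [← singleton_prod_singleton, Measure.prod_prod, singleton_prod_singleton,
    Measure.map_apply (hpast.prodMk hcoin) (measurableSet_singleton _),
    Measure.map_apply hpast (measurableSet_singleton _),
    Measure.map_apply hcoin (measurableSet_singleton _), hv, hvb, hP, hP, Finset.card_range,
    Finset.card_range, pow_succ]
  exact congrArg _ (hP.measure_coin j b).symm

lemma measure_inter_coin [IsProbabilityMeasure P] {j : ℕ} {S : Set (ℕ → Bool)}
    (hS : DependsOn (· ∈ S) (Iio j)) (b : Bool) : P (S ∩ {ω | ω j = b}) = P S * (1 / 2) := by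
  rw [← preimage_restrict_image_of_dependsOn hS, ← hP.measure_coin j b]
  exact (hP.indepFun_restrict_coin j).measure_inter_preimage_eq_mul _ _
    (toFinite _).measurableSet (measurableSet_singleton b)

end IsFairCoins

/-! ### The law of the walk -/

lemma srwStep_congr {ε ε' : ℕ → ℤ} {s : SRWState}
    (h : s.loc (s.pos - 1) = s.loc s.pos → ε s.coins = ε' s.coins) :
    srwStep ε' s = srwStep ε s := by
  rcases lt_trichotomy (s.loc (s.pos - 1)) (s.loc s.pos) with hlt | heq | hgt
  · simp [srwStep, hlt, hlt.not_gt]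
  · simp [srwStep, heq, h heq]
  · simp [srwStep, hgt]

lemma srw_congr {ε ε' : ℕ → ℤ} {n : ℕ} (h : ∀ j < (srw ε n).coins, ε j = ε' j) :
    srw ε' n = srw ε n := by
  induction n with
  | zero => rfl
  | succ n ih =>
    have hcoins := coins_srwStep ε (srw ε n)
    change (srw ε (n + 1)).coins = _ at hcoins
    have hle : (srw ε n).coins ≤ (srw ε (n + 1)).coins := by split_ifs at hcoins <;> omega
    change srwStep ε' (srw ε' n) = srwStep ε (srw ε n)
    rw [ih fun j hj => h j (hj.trans_le hle)]
    exact srwStep_congr fun heq => h _ (by rw [hcoins, if_pos heq]; omega)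

/-- The event that the state after `n` steps is `(X, l)`. -/
def visitEvent (n : ℕ) (X : ℤ) (l : ℤ → ℤ) : Set (ℕ → Bool) :=
  {ω | (srw (coin ω) n).pos = X ∧ (srw (coin ω) n).loc = l}

variable {n : ℕ} {X : ℤ} {l : ℤ → ℤ}

lemma coins_of_mem_visitEvent {ω : ℕ → Bool} (h : ω ∈ visitEvent n X l) :
    (srw (coin ω) n).coins = (coinsOf X l).toNat := by
  rw [← h.1, ← h.2, ← coins_srw (coin_eq_one_or ω) n, Int.toNat_natCast]

lemma dependsOn_visitEvent (n : ℕ) (X : ℤ) (l : ℤ → ℤ) :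
    DependsOn (· ∈ visitEvent n X l) (Iio (coinsOf X l).toNat) := by
  have key {ω η : ℕ → Bool} (h : ∀ i ∈ Iio (coinsOf X l).toNat, ω i = η i)
      (hω : ω ∈ visitEvent n X l) : η ∈ visitEvent n X l := by
    have : srw (coin η) n = srw (coin ω) n := srw_congr fun j hj => by
      rw [coins_of_mem_visitEvent hω] at hj
      rw [coin, coin, h j hj]
    rwa [visitEvent, mem_ofPred_eq, this]
  exact fun ω η h => propext ⟨key h, key fun i hi => (h i hi).symm⟩

lemma measurableSet_visitEvent (n : ℕ) (X : ℤ) (l : ℤ → ℤ) : MeasurableSet (visitEvent n X l) :=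
  measurableSet_of_dependsOn (dependsOn_visitEvent n X l)

lemma visitEvent_inter_cross_eq (n : ℕ) (X : ℤ) (l : ℤ → ℤ) (u v : ℤ) (b : Bool) :
    {ω ∈ visitEvent n X l | v < u ∨ u = v ∧ ω (srw (coin ω) n).coins = b} =
      if v < u then visitEvent n X l
      else if u = v then visitEvent n X l ∩ {ω | ω (coinsOf X l).toNat = b} else ∅ := by
  ext ω
  by_cases hω : ω ∈ visitEvent n X l
  · rw [← coins_of_mem_visitEvent hω]
    split_ifs <;> simp_all
  · split_ifs <;> simp [hω]

lemma measurableSet_visitEvent_inter_cross (n : ℕ) (X : ℤ) (l : ℤ → ℤ) (u v : ℤ) (b : Bool) :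
    MeasurableSet {ω ∈ visitEvent n X l | v < u ∨ u = v ∧ ω (srw (coin ω) n).coins = b} := by
  have hcoin : MeasurableSet {ω : ℕ → Bool | ω (coinsOf X l).toNat = b} :=
    measurableSet_eq_fun (measurable_pi_apply _) measurable_const
  rw [visitEvent_inter_cross_eq]
  split_ifs
  exacts [measurableSet_visitEvent n X l, (measurableSet_visitEvent n X l).inter hcoin, .empty]

lemma visitEvent_succ (n : ℕ) (X : ℤ) (l : ℤ → ℤ) :
    visitEvent (n + 1) X l =
      {ω ∈ visitEvent n (X - 1) (uncross l (X - 1)) |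
        l (X - 1) - 1 < l (X - 2) ∨
          l (X - 2) = l (X - 1) - 1 ∧ ω (srw (coin ω) n).coins = true} ∪
      {ω ∈ visitEvent n (X + 1) (uncross l X) |
        l X - 1 < l (X + 1) ∨ l (X + 1) = l X - 1 ∧ ω (srw (coin ω) n).coins = false} := by
  ext ω
  refine (srwStep_eq_iff (s := srw (coin ω) n) (coin_eq_one_or ω)).trans ?_
  simp [coin, visitEvent]

section Law

variable {P : Measure (ℕ → Bool)} [IsProbabilityMeasure P] (hP : IsFairCoins P)

include hP

lemma measureReal_visitEvent_inter_cross (n : ℕ) (X : ℤ) (l : ℤ → ℤ) (u v : ℤ) (b : Bool) :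
    P.real {ω ∈ visitEvent n X l | v < u ∨ u = v ∧ ω (srw (coin ω) n).coins = b} =
      crossProb u v * P.real (visitEvent n X l) := by
  rw [visitEvent_inter_cross_eq, crossProb]
  split_ifs
  · rw [one_mul]
  · rw [measureReal_def, hP.measure_inter_coin (dependsOn_visitEvent n X l), ENNReal.toReal_mul,
      mul_comm]
    simp [measureReal_def]
  · simp

lemma measureReal_visitEvent_succ (n : ℕ) (X : ℤ) (l : ℤ → ℤ) :
    P.real (visitEvent (n + 1) X l) =
      crossProb (l (X - 2)) (l (X - 1) - 1) * P.real (visitEvent n (X - 1) (uncross l (X - 1))) +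
        crossProb (l (X + 1)) (l X - 1) * P.real (visitEvent n (X + 1) (uncross l X)) := by
  rw [visitEvent_succ, measureReal_union _ (measurableSet_visitEvent_inter_cross _ _ _ _ _ _),
    measureReal_visitEvent_inter_cross hP, measureReal_visitEvent_inter_cross hP]
  rw [disjoint_left]
  rintro ω ⟨⟨h₁, -⟩, -⟩ ⟨⟨h₂, -⟩, -⟩
  omega

/-- The weights are exactly the occupation probabilities: both satisfy the same backward recursion
in time, the only state at which it fails for the weights being the initial one. -/
lemma measureReal_visitEvent (n : ℕ) (X : ℤ) (hl : l =ᶠ[cofinite] aInit) :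
    P.real (visitEvent n X l) = if addedLocalTime l = n then stateWeight X l else 0 := by
  induction n generalizing X l with
  | zero =>
    by_cases h : X = 0 ∧ l = aInit
    · obtain ⟨rfl, rfl⟩ := h
      simp [visitEvent, srw, stateWeight_zero_aInit, addedLocalTime]
    · have hempty : visitEvent 0 X l = ∅ := by
        refine eq_empty_of_forall_notMem ?_
        rintro ω ⟨rfl, rfl⟩
        exact h ⟨rfl, rfl⟩
      rw [hempty, measureReal_empty, eq_comm, ite_eq_right_iff]
      intro h₀
      by_contra hw
      obtain rfl := eq_aInit_of_addedLocalTime_eq_zero hl hw h₀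
      exact h ⟨by_contra fun hX => hw (stateWeight_aInit_of_ne hX), rfl⟩
  | succ n ih =>
    have hiff (i : ℤ) : addedLocalTime (uncross l i) = n ↔ addedLocalTime l = (n + 1 : ℕ) := by
      rw [addedLocalTime_uncross hl]
      push_cast
      omega
    rw [measureReal_visitEvent_succ hP, ih _ (uncross_eventuallyEq hl _),
      ih _ (uncross_eventuallyEq hl _)]
    simp only [hiff]
    split_ifs with ht
    · rw [stateWeight_recursion X hl]
      split_ifs with h₀
      · obtain ⟨rfl, h₁, h₂⟩ := h₀
        by_contra hw
        obtain rfl := eq_aInit_of_zero hl (Ne.symm hw) h₁ h₂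
        simp [addedLocalTime] at ht
        omega
      · rfl
    · simp

end Law

end FairCoins

/-! ### Equality states -/

section EqualityStates

/-- The edge local times of the equality state at `x` with modified local time `g`. -/
def liftProfile (x : ℤ) (g : ℤ → ℤ) (i : ℤ) : ℤ := if i < x then g (i + 1) else g i

/-- The number of coins used up to the equality state at `x` with modified local time `g`. -/
noncomputable def siteCoins (x : ℤ) (g : ℤ → ℤ) : ℤ := ∑ᶠ y, (g y + 1) / 2 + g x

open Classical in
/-- The weight of the equality state at `x` with modified local time `g`, which turns out to be its
probability as the equality state number `siteCoins x g`. -/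
noncomputable def siteWeight (x : ℤ) (g : ℤ → ℤ) : ℝ :=
  if g =ᶠ[cofinite] aTilde then stateWeight x (liftProfile x g) else 0

variable {x : ℤ} {g : ℤ → ℤ}

lemma aTilde_eq (y : ℤ) : aTilde y = if 2 ∣ y then 0 else -1 := by
  simp only [aTilde, even_iff_two_dvd]

lemma aInit_eq_aTilde (i : ℤ) : aInit i = aTilde (if 0 ≤ i then i else i + 1) := by
  rw [aInit_eq, aTilde_eq]

lemma liftProfile_self (x : ℤ) (g : ℤ → ℤ) : liftProfile x g x = g x := if_neg (lt_irrefl x)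

lemma liftProfile_pred (x : ℤ) (g : ℤ → ℤ) : liftProfile x g (x - 1) = g x := by
  rw [liftProfile, if_pos (by omega), sub_add_cancel]

lemma liftProfile_eventuallyEq (x : ℤ) (hg : g =ᶠ[cofinite] aTilde) :
    liftProfile x g =ᶠ[cofinite] aInit := by
  filter_upwards [hg, eventually_cofinite_add hg 1,
    (finite_Icc (min 0 x) (max 0 x)).compl_mem_cofinite] with i h₀ h₁ hi
  rw [mem_compl_iff, mem_Icc] at hi
  rw [liftProfile, aInit_eq_aTilde, h₀, h₁]
  split_ifs <;> first | rfl | omega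

lemma finsum_comp_liftProfile {f : ℤ → ℤ} (hf : (fun y => f (g y)).HasFiniteSupport) (x : ℤ) :
    ∑ᶠ i, f (liftProfile x g i) = ∑ᶠ y, f (g y) + f (g x) := by
  have hf' (s : Set ℤ) : (s ∩ Function.support fun y => f (g y)).Finite := hf.inter_of_right s
  have hbij : BijOn (· + 1) (Iio x) (Iic x) :=
    ⟨fun i hi => Order.add_one_le_of_lt (mem_Iio.1 hi), (add_left_injective 1).injOn,
      fun y hy => ⟨y - 1, Int.sub_one_lt_iff.2 hy, sub_add_cancel y 1⟩⟩
  have hleft : ∑ᶠ i ∈ Iio x, f (liftProfile x g i) = f (g x) + ∑ᶠ y ∈ Iio x, f (g y) := by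
    rw [← finsum_mem_insert' _ self_notMem_Iio (hf' _), Iio_insert]
    exact finsum_mem_eq_of_bijOn _ hbij fun i (hi : i < x) => by rw [liftProfile, if_pos hi]
  have hright : ∑ᶠ i ∈ Ici x, f (liftProfile x g i) = ∑ᶠ y ∈ Ici x, f (g y) :=
    finsum_mem_congr rfl fun i hi => by rw [liftProfile, if_neg (not_lt.2 hi)]
  have hsupp : (fun i => f (liftProfile x g i)).HasFiniteSupport := by
    refine (hf.union (hf.preimage (add_left_injective 1).injOn)).subset fun i hi => ?_
    simp only [Function.mem_support, liftProfile] at hi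
    split_ifs at hi
    exacts [Or.inr hi, Or.inl hi]
  rw [← finsum_mem_univ, ← finsum_mem_univ fun y => f (g y), ← Iio_union_Ici (a := x),
    finsum_mem_union' (Iio_disjoint_Ici le_rfl) (hsupp.inter_of_right _)
      (hsupp.inter_of_right _), finsum_mem_union' (Iio_disjoint_Ici le_rfl) (hf' _) (hf' _),
    hleft, hright]
  ring

lemma hasFiniteSupport_half (hg : g =ᶠ[cofinite] aTilde) :
    (fun y => (g y + 1) / 2).HasFiniteSupport := by
  refine eventually_cofinite.1 (hg.mono fun y hy => ?_)
  change (g y + 1) / 2 = 0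
  rw [hy, aTilde_eq]
  split_ifs <;> rfl

lemma coinsOf_liftProfile (hg : g =ᶠ[cofinite] aTilde) (x : ℤ) :
    coinsOf x (liftProfile x g) = siteCoins x g := by
  rw [coinsOf, siteCoins, finsum_comp_liftProfile (f := fun a => (a + 1) / 2)
    (hasFiniteSupport_half hg), liftProfile_self, liftProfile_pred, max_self]
  omega

variable {ε : ℕ → ℤ}

lemma modLoc_eventuallyEq (ε : ℕ → ℤ) (n : ℕ) : modLoc ε n =ᶠ[cofinite] aTilde := by
  have h := srw_loc_eventuallyEq ε n
  filter_upwards [h, eventually_cofinite_add h (-1),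
    (finite_Icc (min 0 (Xwalk ε n)) (max 0 (Xwalk ε n))).compl_mem_cofinite] with y h₀ h₁ hy
  rw [mem_compl_iff, mem_Icc] at hy
  rw [modLoc, ellEdge, ellEdge, sub_eq_add_neg, h₀, h₁, aInit_eq_aTilde, aInit_eq_aTilde]
  split_ifs <;> first | rfl | omega | (congr 1; omega)

lemma liftProfile_modLoc {n : ℕ} (h : IsEqTime ε n) :
    liftProfile (Xwalk ε n) (modLoc ε n) = (srw ε n).loc := by
  funext i
  unfold liftProfile modLoc
  split_ifs with h₁ h₂ h₂
  · rw [ellEdge, add_sub_cancel_right]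
  · omega
  · obtain rfl : i = Xwalk ε n := by omega
    exact h
  · rfl

lemma modLoc_of_loc_eq_liftProfile {n : ℕ} (hx : Xwalk ε n = x)
    (h : (srw ε n).loc = liftProfile x g) : modLoc ε n = g := by
  funext y
  rw [modLoc, ellEdge, ellEdge, h, hx, liftProfile, liftProfile, sub_add_cancel]
  split_ifs <;> first | rfl | omega

lemma isEqTime_of_loc_eq_liftProfile {n : ℕ} (hx : Xwalk ε n = x)
    (h : (srw ε n).loc = liftProfile x g) : IsEqTime ε n := by
  rw [IsEqTime, ellMinus, ellPlus, ellEdge, ellEdge, h, hx, liftProfile_pred, liftProfile_self]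

/-- The event that the equality state number `k` is `(x, g)`. -/
def eqStateEvent (k : ℕ) (x : ℤ) (g : ℤ → ℤ) : Set (ℕ → Bool) :=
  {ω | Xwalk (coin ω) (timeN (coin ω) k) = x ∧ modLoc (coin ω) (timeN (coin ω) k) = g}

lemma mem_eqStateEvent_iff {k : ℕ} {ω : ℕ → Bool} :
    ω ∈ eqStateEvent k x g ↔ (g =ᶠ[cofinite] aTilde ∧ siteCoins x g = k) ∧
      ω ∈ visitEvent (addedLocalTime (liftProfile x g)).toNat x (liftProfile x g) := by
  have hε := coin_eq_one_or ω
  constructor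
  · rintro ⟨rfl, rfl⟩
    have hloc := liftProfile_modLoc (isEqTime_timeN hε k)
    have hcof := modLoc_eventuallyEq (coin ω) (timeN (coin ω) k)
    refine ⟨⟨hcof, ?_⟩, ?_⟩
    · rw [← coinsOf_liftProfile hcof, hloc, Xwalk, ← coins_srw hε, Nat.cast_inj]
      exact ((eq_timeN_iff hε).1 rfl).2
    · rw [hloc, addedLocalTime_srw hε, Int.toNat_natCast]
      exact ⟨rfl, rfl⟩
  · rintro ⟨⟨hcof, hk⟩, hx, hloc⟩
    have hn : (addedLocalTime (liftProfile x g)).toNat = timeN (coin ω) k := by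
      refine (eq_timeN_iff hε).2 ⟨isEqTime_of_loc_eq_liftProfile hx hloc, ?_⟩
      rw [← Nat.cast_inj (R := ℤ), coins_srw hε, hx, hloc, coinsOf_liftProfile hcof, hk]
    rw [hn] at hx hloc
    exact ⟨hx, modLoc_of_loc_eq_liftProfile hx hloc⟩

lemma eqStateEvent_eq_visitEvent {k : ℕ} (hg : g =ᶠ[cofinite] aTilde) (hk : siteCoins x g = k) :
    eqStateEvent k x g =
      visitEvent (addedLocalTime (liftProfile x g)).toNat x (liftProfile x g) :=
  Set.ext fun _ => mem_eqStateEvent_iff.trans (and_iff_right ⟨hg, hk⟩)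

lemma eqStateEvent_eq_empty {k : ℕ} (h : ¬ (g =ᶠ[cofinite] aTilde ∧ siteCoins x g = k)) :
    eqStateEvent k x g = ∅ :=
  eq_empty_of_forall_notMem fun _ hω => h (mem_eqStateEvent_iff.1 hω).1

lemma measurableSet_eqStateEvent (k : ℕ) (x : ℤ) (g : ℤ → ℤ) :
    MeasurableSet (eqStateEvent k x g) := by
  by_cases h : g =ᶠ[cofinite] aTilde ∧ siteCoins x g = k
  · exact eqStateEvent_eq_visitEvent h.1 h.2 ▸ measurableSet_visitEvent _ _ _
  · exact eqStateEvent_eq_empty h ▸ .empty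

lemma siteWeight_nonneg (x : ℤ) (g : ℤ → ℤ) : 0 ≤ siteWeight x g := by
  unfold siteWeight
  split_ifs
  exacts [stateWeight_nonneg _ _, le_rfl]

lemma measureReal_eqStateEvent {P : Measure (ℕ → Bool)} [IsProbabilityMeasure P]
    (hP : IsFairCoins P) (k : ℕ) (x : ℤ) (g : ℤ → ℤ) :
    P.real (eqStateEvent k x g) = if siteCoins x g = k then siteWeight x g else 0 := by
  by_cases h : g =ᶠ[cofinite] aTilde ∧ siteCoins x g = k
  · have hl := liftProfile_eventuallyEq x h.1
    rw [eqStateEvent_eq_visitEvent h.1 h.2, measureReal_visitEvent hP _ _ hl, if_pos h.2,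
      siteWeight, if_pos h.1, ite_eq_left_iff]
    contrapose!
    intro hne
    rw [Int.toNat_of_nonneg]
    exact finsum_nonneg fun i => sub_nonneg.2 (aInit_le hl hne.symm i)
  · rw [eqStateEvent_eq_empty h, measureReal_empty, siteWeight]
    split_ifs <;> tauto

lemma siteCoins_of_mem_eqStateEvent {k : ℕ} {ω : ℕ → Bool} (h : ω ∈ eqStateEvent k x g) :
    siteCoins x g = k :=
  (mem_eqStateEvent_iff.1 h).1.2

end EqualityStates

/-! ### The shape of a profile of positive weight -/

section Shape

/-- The factor of the pair of neighbouring sites `i`, `i + 1` in the weight of the equality state at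
`x` with modified local time `g`. -/
noncomputable def bondWeight (x : ℤ) (g : ℤ → ℤ) (i : ℤ) : ℝ :=
  if x ≤ i then stepWeight i (g i) (g (i + 1)) else stepWeight (-(i + 1)) (g (i + 1)) (g i)

variable {x i : ℤ} {g : ℤ → ℤ}

lemma edgeWeight_liftProfile (x : ℤ) (g : ℤ → ℤ) :
    edgeWeight x (liftProfile x g) = bondWeight x g := by
  funext i
  unfold edgeWeight bondWeight liftProfile
  split_ifs <;> first | rfl | omega | rw [sub_add_cancel]

lemma siteWeight_eq (hg : g =ᶠ[cofinite] aTilde) (x : ℤ) :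
    siteWeight x g = contactWeight (g x) (g x) * ∏ᶠ i, bondWeight x g i := by
  rw [siteWeight, if_pos hg, stateWeight, liftProfile_pred, liftProfile_self,
    edgeWeight_liftProfile]

lemma hasFiniteMulSupport_bondWeight (hg : g =ᶠ[cofinite] aTilde) (x : ℤ) :
    (bondWeight x g).HasFiniteMulSupport :=
  edgeWeight_liftProfile x g ▸ hasFiniteMulSupport_edgeWeight x (liftProfile_eventuallyEq x hg)

lemma eventuallyEq_aTilde_of_siteWeight_ne_zero (h : siteWeight x g ≠ 0) :
    g =ᶠ[cofinite] aTilde :=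
  not_imp_comm.1 (fun hg => if_neg hg) h

/-! ### Reflection -/

lemma eventuallyEq_aTilde_neg (hg : g =ᶠ[cofinite] aTilde) :
    (fun y => g (-y)) =ᶠ[cofinite] aTilde := by
  filter_upwards [neg_injective.tendsto_cofinite.eventually hg] with y hy
  rw [hy, aTilde_eq, aTilde_eq]
  simp only [dvd_neg]

lemma bondWeight_neg (x : ℤ) (g : ℤ → ℤ) (i : ℤ) :
    bondWeight (-x) (fun y => g (-y)) (-(i + 1)) = bondWeight x g i := by
  unfold bondWeight
  rw [show -(i + 1) + 1 = -i by ring]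
  simp only [neg_neg]
  split_ifs <;> first | rfl | omega

lemma siteWeight_neg (x : ℤ) (g : ℤ → ℤ) :
    siteWeight (-x) (fun y => g (-y)) = siteWeight x g := by
  by_cases hg : g =ᶠ[cofinite] aTilde
  · rw [siteWeight_eq hg, siteWeight_eq (eventuallyEq_aTilde_neg hg), neg_neg,
      ← finprod_comp_equiv ((Equiv.addRight (1 : ℤ)).trans (Equiv.neg ℤ))]
    simp only [Equiv.trans_apply, Equiv.coe_addRight, Equiv.neg_apply, bondWeight_neg]
  · have hg' : ¬ (fun y => g (-y)) =ᶠ[cofinite] aTilde := fun h =>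
      hg (by simpa only [neg_neg] using eventuallyEq_aTilde_neg h)
    rw [siteWeight, siteWeight, if_neg hg, if_neg hg']

lemma mMinus_eq_neg_mPlus (hne : {y : ℤ | y ≤ 0 ∧ g y = -1}.Nonempty) :
    mMinus g = -mPlus fun y => g (-y) := by
  have hset : {y : ℤ | 0 ≤ y ∧ g (-y) = -1} = -{y | y ≤ 0 ∧ g y = -1} := by
    ext y; simp
  rw [mMinus, mPlus, hset, csInf_neg hne ⟨0, fun y hy => hy.1⟩]
  ring

lemma exists_neg_one (hg : g =ᶠ[cofinite] aTilde) : {y : ℤ | 0 ≤ y ∧ g y = -1}.Nonempty := by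
  have hinj : Function.Injective fun n : ℕ => 2 * (n : ℤ) + 1 := fun m n h => by simpa using h
  obtain ⟨n, hn⟩ := (hinj.tendsto_cofinite.eventually hg).exists
  refine ⟨2 * n + 1, by positivity, ?_⟩
  rw [hn, aTilde_eq, if_neg (by omega)]

/-! ### Steps of the profile -/

lemma nonneg_of_siteWeight_ne_zero (h : siteWeight x g ≠ 0) : 0 ≤ g x := by
  rw [siteWeight_eq (eventuallyEq_aTilde_of_siteWeight_ne_zero h)] at h
  have := contactWeight_ne_zero (left_ne_zero_of_mul h)
  omega

lemma isStep_add_one (h : siteWeight x g ≠ 0) (hi : x ≤ i) : IsStep i (g i) (g (i + 1)) := by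
  have hg := eventuallyEq_aTilde_of_siteWeight_ne_zero h
  rw [siteWeight, if_pos hg] at h
  have hstep := isStep_right (liftProfile_eventuallyEq x hg) h hi
  rwa [liftProfile, liftProfile, if_neg (by omega), if_neg (by omega)] at hstep

lemma isStep_sub_one (h : siteWeight x g ≠ 0) (hi : i ≤ x) : IsStep (-i) (g i) (g (i - 1)) := by
  rw [← siteWeight_neg] at h
  simpa only [neg_neg, neg_add_rev, ← sub_eq_add_neg, sub_eq_neg_add] using
    isStep_add_one h (neg_le_neg hi)

lemma neg_one_le_of_siteWeight_ne_zero (h : siteWeight x g ≠ 0) (i : ℤ) : -1 ≤ g i :=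
  (le_total x i).elim (fun hi => (isStep_add_one h hi).neg_one_le)
    fun hi => (isStep_sub_one h hi).neg_one_le

lemma exists_siteWeight_eq_mul (hg : g =ᶠ[cofinite] aTilde) (x : ℤ) : ∃ R : ℝ,
    siteWeight x g = contactWeight (g x) (g x) * (stepWeight x (g x) (g (x + 1)) * R) ∧
    siteWeight (x + 1) g = contactWeight (g (x + 1)) (g (x + 1)) *
      (stepWeight (-(x + 1)) (g (x + 1)) (g x) * R) := by
  refine ⟨∏ᶠ (i) (_ : i ≠ x), bondWeight x g i, ?_, ?_⟩
  · rw [siteWeight_eq hg, ← mul_finprod_cond_ne x (hasFiniteMulSupport_bondWeight hg x),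
      bondWeight, if_pos le_rfl]
  · rw [siteWeight_eq hg, ← mul_finprod_cond_ne x (hasFiniteMulSupport_bondWeight hg (x + 1)),
      bondWeight, if_neg (by omega)]
    congr 2
    refine finprod_congr fun i => finprod_congr fun hi => ?_
    unfold bondWeight
    split_ifs <;> first | rfl | omega

lemma siteWeight_add_one (h : siteWeight x g ≠ 0) (hx : 1 ≤ g x) :
    siteWeight (x + 1) g =
      if 1 ≤ g (x + 1) then siteWeight x g else if 0 ≤ x then 2 * siteWeight x g else 0 := by
  obtain ⟨R, hR₁, hR₂⟩ := exists_siteWeight_eq_mul (eventuallyEq_aTilde_of_siteWeight_ne_zero h) x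
  have hstep := isStep_add_one h le_rfl
  have hadj := hstep.adjacent
  have heven := hstep.even
  have hcontact {a : ℤ} (ha : 0 ≤ a) : contactWeight a a = 1 := by simp [contactWeight, ha]
  rw [stepWeight_of_one_le hx, if_pos ⟨heven, hadj⟩, hcontact (by omega)] at hR₁
  rw [hR₂, hR₁, hcontact (by omega)]
  split_ifs with h1 h0
  · rw [stepWeight_of_one_le h1, if_pos (by omega)]
  all_goals
    rw [show g (x + 1) = 0 by omega, stepWeight_zero]
    split_ifs <;> first | omega | ring

end Shape

/-! ### Excursions -/

section Plateau

variable {x y a b : ℤ} {g : ℤ → ℤ}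

lemma eq_aTilde_of_siteWeight_zero_ne_zero (h : siteWeight 0 g ≠ 0) (h0 : g 0 = 0) :
    g = aTilde := by
  have hg := eventuallyEq_aTilde_of_siteWeight_ne_zero h
  rw [siteWeight, if_pos hg] at h
  have hl := eq_aInit_of_zero (liftProfile_eventuallyEq 0 hg) h
    ((liftProfile_pred 0 g).trans h0) ((liftProfile_self 0 g).trans h0)
  funext y
  by_cases hy : 0 ≤ y
  · simpa [liftProfile, aInit_eq_aTilde, hy, hy.not_gt] using congrFun hl y
  · simpa [liftProfile, aInit_eq_aTilde, show ¬ 1 ≤ y by omega, show y < 1 by omega]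
      using congrFun hl (y - 1)

lemma siteWeight_add_one_ne_zero_of_neg (h : siteWeight x g ≠ 0) (h0 : g x = 0) (hx : x < 0) :
    siteWeight (x + 1) g ≠ 0 ∧ g (x + 1) = 1 := by
  obtain ⟨R, hR₁, hR₂⟩ := exists_siteWeight_eq_mul (eventuallyEq_aTilde_of_siteWeight_ne_zero h) x
  have hstep := isStep_add_one h le_rfl
  have heven := hstep.even
  have h1 := hstep.reflected h0 hx
  rw [h0, h1, stepWeight_of_one_le le_rfl, if_pos (by omega)] at hR₂
  have hR : R ≠ 0 := fun hR => h (by rw [hR₁, hR]; ring)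
  exact ⟨by simp [hR₂, hR, contactWeight], h1⟩

lemma exists_one_le_height (h : siteWeight x g ≠ 0) (hg : g ≠ aTilde) :
    ∃ y, siteWeight y g ≠ 0 ∧ 1 ≤ g y := by
  rcases (nonneg_of_siteWeight_ne_zero h).eq_or_lt' with h0 | h0
  · rcases lt_trichotomy x 0 with hx | rfl | hx
    · have := siteWeight_add_one_ne_zero_of_neg h h0 hx
      exact ⟨x + 1, this.1, this.2.ge⟩
    · exact absurd (eq_aTilde_of_siteWeight_zero_ne_zero h h0) hg
    · rw [← siteWeight_neg] at h
      have := siteWeight_add_one_ne_zero_of_neg h (by rwa [neg_neg]) (neg_neg_of_pos hx)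
      rw [show -x + 1 = -(x - 1) by ring, siteWeight_neg, neg_neg] at this
      exact ⟨x - 1, this.1, this.2.ge⟩
  · exact ⟨x, h, h0⟩

/-- The walker at a site `x` of positive height, with the excursion of the profile above height
`0` around `x`, which extends from `a` to `b`. -/
structure IsExcursion (g : ℤ → ℤ) (a b x : ℤ) : Prop where
  siteWeight_ne_zero : siteWeight x g ≠ 0
  left_lt : a < x
  lt_right : x < b
  left_eq_zero : g a = 0
  right_eq_zero : g b = 0
  one_le : ∀ y, a < y → y < b → 1 ≤ g y

lemma exists_right_zero (h : siteWeight x g ≠ 0) (hx : 1 ≤ g x) :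
    ∃ b, x < b ∧ g b = 0 ∧ ∀ y, x ≤ y → y < b → 1 ≤ g y := by
  have hex : ∃ b, x < b ∧ g b ≤ 0 := by
    obtain ⟨b, hgb, hb⟩ := (((eventuallyEq_aTilde_of_siteWeight_ne_zero h).filter_mono
      atTop_le_cofinite).and (eventually_gt_atTop x)).exists
    refine ⟨b, hb, hgb.le.trans ?_⟩
    rw [aTilde_eq]
    split_ifs <;> norm_num
  obtain ⟨b, ⟨hxb, hgb⟩, hleast⟩ := Int.exists_least_of_bdd (P := fun b => x < b ∧ g b ≤ 0)
    ⟨x, fun z hz => hz.1.le⟩ hex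
  have hpos (y : ℤ) (hxy : x ≤ y) (hyb : y < b) : 1 ≤ g y := by
    rcases hxy.eq_or_lt with rfl | hxy
    · exact hx
    · by_contra! hy
      exact hyb.not_ge (hleast y ⟨hxy, by omega⟩)
  have hstep := (isStep_add_one h (show x ≤ b - 1 by omega)).adjacent
  have := hpos (b - 1) (by omega) (by omega)
  rw [sub_add_cancel] at hstep
  exact ⟨b, hxb, by omega, hpos⟩

lemma exists_isExcursion (h : siteWeight y g ≠ 0) (hg : g ≠ aTilde) :
    ∃ a b x, IsExcursion g a b x := by
  obtain ⟨x, hx, h1⟩ := exists_one_le_height h hg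
  obtain ⟨b, hxb, hb, hright⟩ := exists_right_zero hx h1
  obtain ⟨c, hxc, hc, hleft⟩ := exists_right_zero (x := -x) (g := fun y => g (-y))
    (by rwa [siteWeight_neg]) (by simpa only [neg_neg])
  refine ⟨-c, b, x, hx, by omega, hxb, hc, hb, fun z hz hzb => ?_⟩
  rcases le_total x z with hxz | hxz
  · exact hright z hxz hzb
  · simpa only [neg_neg] using hleft (-z) (by omega) (by omega)

lemma nZeros_ne_zero (h₁ : mMinus g < y) (h₂ : y < mPlus g) (hy : g y = 0) : nZeros g ≠ 0 :=
  ncard_ne_zero_of_mem (a := y) ⟨h₁, h₂, hy⟩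
    ((finite_Icc (mMinus g) (mPlus g)).subset fun _ hz => ⟨hz.1.le, hz.2.1.le⟩)

namespace IsExcursion

variable (h : IsExcursion g a b x)
include h

lemma neg : IsExcursion (fun y => g (-y)) (-b) (-a) (-x) where
  siteWeight_ne_zero := by rw [siteWeight_neg]; exact h.siteWeight_ne_zero
  left_lt := neg_lt_neg h.lt_right
  lt_right := neg_lt_neg h.left_lt
  left_eq_zero := by rw [neg_neg]; exact h.right_eq_zero
  right_eq_zero := by rw [neg_neg]; exact h.left_eq_zero
  one_le y hy hya := h.one_le (-y) (by omega) (by omega)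

lemma siteWeight_eq_of_le (hxy : x ≤ y) (hyb : y < b) : siteWeight y g = siteWeight x g := by
  induction y, hxy using Int.leInduction with
  | base => rfl
  | succ y hxy ih =>
    have ih := ih (by omega)
    have hax := h.left_lt
    rw [siteWeight_add_one (ih ▸ h.siteWeight_ne_zero) (h.one_le y (by omega) (by omega)),
      if_pos (h.one_le (y + 1) (by omega) hyb), ih]

lemma siteWeight_eq (hay : a < y) (hyb : y < b) : siteWeight y g = siteWeight x g := by
  rcases le_total x y with hxy | hxy
  · exact h.siteWeight_eq_of_le hxy hyb
  · rw [← siteWeight_neg y, ← siteWeight_neg x]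
    exact h.neg.siteWeight_eq_of_le (neg_le_neg hxy) (neg_lt_neg hay)

lemma siteWeight_right : siteWeight b g = if 0 < b then 2 * siteWeight x g else 0 := by
  have hax := h.left_lt
  have hxb := h.lt_right
  have heq := h.siteWeight_eq (y := b - 1) (by omega) (by omega)
  have hb := siteWeight_add_one (heq ▸ h.siteWeight_ne_zero)
    (h.one_le (b - 1) (by omega) (by omega))
  rw [sub_add_cancel, h.right_eq_zero, if_neg (by norm_num), heq] at hb
  rw [hb]
  split_ifs <;> first | rfl | omega

lemma siteWeight_left : siteWeight a g = if a < 0 then 2 * siteWeight x g else 0 := by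
  simpa only [siteWeight_neg, neg_pos] using h.neg.siteWeight_right

lemma right_add_one (hb : 0 ≤ b) : g (b + 1) = -1 :=
  (isStep_add_one h.siteWeight_ne_zero h.lt_right.le).absorbed h.right_eq_zero hb

lemma siteWeight_of_right_lt (hby : b < y) : siteWeight y g = 0 := by
  by_contra hy
  rcases le_or_gt b 0 with hb | hb
  · have hax := h.left_lt
    have hxb := h.lt_right
    have := h.one_le (b - 1) (by omega) (by omega)
    have := (isStep_sub_one hy hby.le).absorbed h.right_eq_zero (by omega)
    omega
  · have := (isStep_sub_one hy (i := b + 1) (by omega)).alternating (h.right_add_one hb.le)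
    omega

lemma siteWeight_of_lt_left (hya : y < a) : siteWeight y g = 0 := by
  rw [← siteWeight_neg]
  exact h.neg.siteWeight_of_right_lt (neg_lt_neg hya)

lemma eventuallyEq_aTilde : g =ᶠ[cofinite] aTilde :=
  eventuallyEq_aTilde_of_siteWeight_ne_zero h.siteWeight_ne_zero

/-! ### The admissible interval -/

lemma mPlus_eq (hb : 0 ≤ b) : mPlus g = b := by
  have hleast : IsLeast {y : ℤ | 0 ≤ y ∧ g y = -1} (b + 1) := by
    refine ⟨⟨by omega, h.right_add_one hb⟩, fun y ⟨hy0, hy⟩ => ?_⟩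
    by_contra! hyb
    have hb0 := h.right_eq_zero
    obtain hya | hya := le_or_gt y a
    · have := (isStep_sub_one h.siteWeight_ne_zero (hya.trans h.left_lt.le)).alternating hy
      omega
    · obtain rfl | hyb := (Int.lt_add_one_iff.1 hyb).eq_or_lt
      · omega
      · have := h.one_le y hya hyb
        omega
  rw [mPlus, hleast.csInf_eq]
  ring

lemma mMinus_eq_neg : mMinus g = -mPlus fun y => g (-y) := by
  obtain ⟨y, hy0, hy⟩ := exists_neg_one h.neg.eventuallyEq_aTilde
  exact mMinus_eq_neg_mPlus ⟨-y, by omega, hy⟩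

lemma mMinus_eq (ha : a ≤ 0) : mMinus g = a := by
  rw [h.mMinus_eq_neg, h.neg.mPlus_eq (neg_nonneg.2 ha), neg_neg]

lemma mPlus_nonneg (hb : b < 0) : 0 ≤ mPlus g := by
  have hle : 1 ≤ sInf {y : ℤ | 0 ≤ y ∧ g y = -1} := by
    refine le_csInf (exists_neg_one h.eventuallyEq_aTilde) fun y ⟨hy0, hy⟩ => ?_
    have hxb := h.lt_right
    have := (isStep_add_one h.siteWeight_ne_zero (show x ≤ y by omega)).alternating hy
    omega
  rw [mPlus]
  omega

lemma mMinus_nonpos (ha : 0 < a) : mMinus g ≤ 0 := by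
  have := h.neg.mPlus_nonneg (neg_neg_of_pos ha)
  rw [h.mMinus_eq_neg]
  omega

lemma ne_zero_of_lt_mPlus (hb : b < 0) (hy0 : 0 ≤ y) (hy : y < mPlus g) : g y ≠ 0 := by
  intro hgy
  have hxb := h.lt_right
  have hneg := (isStep_add_one h.siteWeight_ne_zero (show x ≤ y by omega)).absorbed hgy hy0
  have : sInf {y : ℤ | 0 ≤ y ∧ g y = -1} ≤ y + 1 :=
    csInf_le ⟨0, fun _ hz => hz.1⟩ ⟨by omega, hneg⟩
  rw [mPlus] at hy
  omega

lemma ne_aTilde : g ≠ aTilde := by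
  rintro rfl
  have := h.one_le x h.left_lt h.lt_right
  rw [aTilde_eq] at this
  split_ifs at this <;> omega

lemma interI_of_nonpos_of_nonneg (ha : a ≤ 0) (hb : 0 ≤ b) : interI g = Icc a b := by
  have hzeros : nZeros g = 0 := by
    rw [nZeros, h.mMinus_eq ha, h.mPlus_eq hb, (eq_empty_iff_forall_notMem.2 ?_ :
      {y | a < y ∧ y < b ∧ g y = 0} = ∅), ncard_empty]
    rintro y ⟨hay, hyb, hy⟩
    have := h.one_le y hay hyb
    omega
  rw [interI, if_neg h.ne_aTilde, if_pos hzeros, h.mMinus_eq ha, h.mPlus_eq hb]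

lemma interI_of_right_neg (hb : b < 0) : interI g = Ico a b := by
  have hab := h.left_lt.trans h.lt_right
  have hm := h.mMinus_eq (by omega)
  have hmp := h.mPlus_nonneg hb
  have hzeros : nZeros g ≠ 0 := nZeros_ne_zero (y := b) (by omega) (by omega) h.right_eq_zero
  have hoPlus : oPlus g ≤ 0 := by
    refine csSup_le ⟨b, by omega, h.right_eq_zero⟩ fun y ⟨hy, hgy⟩ => ?_
    by_contra! hy0
    exact h.ne_zero_of_lt_mPlus hb hy0.le hy hgy
  have hoMinus : oMinus g = b := by
    refine IsLeast.csInf_eq ⟨⟨by omega, h.right_eq_zero⟩, fun y ⟨hay, hy⟩ => ?_⟩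
    by_contra! hyb
    have := h.one_le y (by omega) hyb
    omega
  rw [interI, if_neg h.ne_aTilde, if_neg hzeros, if_neg hoPlus.not_gt, hm, hoMinus]

lemma interI_of_left_pos (ha : 0 < a) : interI g = Ioc a b := by
  have hab := h.left_lt.trans h.lt_right
  have hm := h.mPlus_eq (by omega)
  have hmm := h.mMinus_nonpos ha
  have hzeros : nZeros g ≠ 0 := nZeros_ne_zero (y := a) (by omega) (by omega) h.left_eq_zero
  have hoPlus : oPlus g = a := by
    refine IsGreatest.csSup_eq ⟨⟨by omega, h.left_eq_zero⟩, fun y ⟨hyb, hy⟩ => ?_⟩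
    by_contra! hay
    have := h.one_le y hay (by omega)
    omega
  rw [interI, if_neg h.ne_aTilde, if_neg hzeros, hoPlus, if_pos ha, hm]

lemma interI_eq :
    interI g = Icc (if a ≤ 0 then a else a + 1) (if 0 ≤ b then b else b - 1) := by
  have hab := h.left_lt.trans h.lt_right
  ext y
  rcases lt_or_ge b 0 with hb | hb
  · rw [h.interI_of_right_neg hb, mem_Ico, mem_Icc, if_pos (by omega), if_neg hb.not_ge]
    omega
  rcases lt_or_ge 0 a with ha | ha
  · rw [h.interI_of_left_pos ha, mem_Ioc, mem_Icc, if_neg ha.not_ge, if_pos hb]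
    omega
  · rw [h.interI_of_nonpos_of_nonneg ha hb, if_pos ha, if_pos hb]

lemma sum_siteWeight :
    ∑ y ∈ Finset.Icc a b, siteWeight y g =
      siteWeight a g + siteWeight b g + (b - a - 1) * siteWeight x g := by
  have hab := h.left_lt.trans h.lt_right
  have hinner : ∑ y ∈ Finset.Ioo a b, siteWeight y g = (b - a - 1) * siteWeight x g := by
    rw [Finset.sum_congr rfl fun y hy =>
      h.siteWeight_eq (Finset.mem_Ioo.1 hy).1 (Finset.mem_Ioo.1 hy).2, Finset.sum_const,
      Int.card_Ioo, nsmul_eq_mul, ← Int.cast_natCast, Int.toNat_of_nonneg (by omega)]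
    push_cast
    ring
  rw [← Finset.Ioc_insert_left hab.le, Finset.sum_insert Finset.left_notMem_Ioc,
    ← Finset.Ioo_insert_right hab, Finset.sum_insert Finset.right_notMem_Ioo, hinner]
  ring

end IsExcursion

/-- The admissible interval of `g` is `[m, n]`. It carries all the weight, at most `C` at sites of
nonzero height, and at least `C` per site on average. -/
structure HasPlateau (g : ℤ → ℤ) (m n : ℤ) (C : ℝ) : Prop where
  le : m ≤ n
  nonneg : 0 ≤ C
  interI_eq : interI g = Icc m n
  siteWeight_eq_zero : ∀ y ∉ Icc m n, siteWeight y g = 0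
  siteWeight_le : ∀ y, g y ≠ 0 → siteWeight y g ≤ C
  le_sum : (n + 1 - m) * C ≤ ∑ y ∈ Finset.Icc m n, siteWeight y g

lemma IsExcursion.hasPlateau (h : IsExcursion g a b x) :
    HasPlateau g (if a ≤ 0 then a else a + 1) (if 0 ≤ b then b else b - 1) (siteWeight x g) := by
  have hax := h.left_lt
  have hxb := h.lt_right
  have hzero (y : ℤ) (hy : y ∉ Icc (if a ≤ 0 then a else a + 1) (if 0 ≤ b then b else b - 1)) :
      siteWeight y g = 0 := by
    obtain hya | rfl | hy' | rfl | hby : y < a ∨ y = a ∨ (a < y ∧ y < b) ∨ y = b ∨ b < y := by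
      omega
    · exact h.siteWeight_of_lt_left hya
    · rw [h.siteWeight_left, if_neg]
      rw [mem_Icc] at hy
      split_ifs at hy <;> omega
    · rw [mem_Icc] at hy
      split_ifs at hy <;> omega
    · rw [h.siteWeight_right, if_neg]
      rw [mem_Icc] at hy
      split_ifs at hy <;> omega
    · exact h.siteWeight_of_right_lt hby
  refine ⟨by split_ifs <;> omega, siteWeight_nonneg x g, h.interI_eq, hzero, fun y hy => ?_, ?_⟩
  · by_cases hy' : a < y ∧ y < b
    · exact (h.siteWeight_eq hy'.1 hy'.2).le
    · have : y ≠ a := fun hya => hy (hya ▸ h.left_eq_zero)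
      have : y ≠ b := fun hyb => hy (hyb ▸ h.right_eq_zero)
      obtain hya | hby : y < a ∨ b < y := by omega
      · exact (h.siteWeight_of_lt_left hya).trans_le (siteWeight_nonneg x g)
      · exact (h.siteWeight_of_right_lt hby).trans_le (siteWeight_nonneg x g)
  · rw [Finset.sum_subset (Finset.Icc_subset_Icc (a₂ := a) (b₂ := b) ?_ ?_) fun y _ hy =>
      hzero y (by simpa using hy), h.sum_siteWeight, h.siteWeight_left, h.siteWeight_right]
    · have := siteWeight_nonneg x g
      split_ifs <;> first | omega | (push_cast; nlinarith)
    all_goals split_ifs <;> omega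

lemma exists_hasPlateau (h : siteWeight x g ≠ 0) (hg : g ≠ aTilde) :
    ∃ m n C, HasPlateau g m n C :=
  let ⟨_, _, _, hexc⟩ := exists_isExcursion h hg
  ⟨_, _, _, hexc.hasPlateau⟩

end Plateau

/-! ### Counting coins -/

section StateMass

variable {x h : ℤ} {g : ℤ → ℤ} {z : ℝ}

lemma sum_half_le_finsum (hw : siteWeight x g ≠ 0) (T : Finset ℤ) :
    ∑ y ∈ T, (g y + 1) / 2 ≤ ∑ᶠ y, (g y + 1) / 2 := by
  have hs := hasFiniteSupport_half (eventuallyEq_aTilde_of_siteWeight_ne_zero hw)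
  rw [finsum_eq_sum_of_support_subset (s := T ∪ hs.toFinset) _
    (hs.coe_toFinset.ge.trans (by simp))]
  refine Finset.sum_le_sum_of_subset_of_nonneg Finset.subset_union_left fun y _ _ => ?_
  have := neg_one_le_of_siteWeight_ne_zero hw y
  omega

lemma one_le_siteCoins (hw : siteWeight x g ≠ 0) (hg : g ≠ aTilde) : 1 ≤ siteCoins x g := by
  obtain ⟨y, -, hy⟩ := exists_one_le_height hw hg
  have hsum := sum_half_le_finsum hw {y}
  have := nonneg_of_siteWeight_ne_zero hw
  rw [Finset.sum_singleton] at hsum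
  unfold siteCoins
  omega

lemma siteCoins_aTilde (hw : siteWeight x aTilde ≠ 0) : siteCoins x aTilde = 0 := by
  have hhalf (y : ℤ) : (aTilde y + 1) / 2 = 0 := by
    rw [aTilde_eq]
    split_ifs <;> rfl
  have h0 := nonneg_of_siteWeight_ne_zero hw
  simp only [siteCoins, hhalf, finsum_zero, zero_add]
  rw [aTilde_eq] at h0 ⊢
  split_ifs at h0 ⊢ <;> omega

lemma height_sub_le (hw : siteWeight x g ≠ 0) (j : ℕ) : g x - j ≤ g (x + j) := by
  induction j with
  | zero => simp
  | succ j ih =>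
    have := (isStep_add_one hw (show x ≤ x + j by omega)).adjacent
    push_cast
    rw [← add_assoc]
    omega

lemma sq_height_le (hw : siteWeight x g ≠ 0) : g x ^ 2 ≤ 4 * siteCoins x g := by
  have h0 := nonneg_of_siteWeight_ne_zero hw
  obtain ⟨n, hn⟩ := Int.eq_ofNat_of_zero_le h0
  have hgauss (m : ℕ) : 2 * ∑ j ∈ Finset.range m, (g x - j) = m * (2 * g x - m + 1) := by
    induction m with
    | zero => simp
    | succ m ih =>
      rw [Finset.sum_range_succ, mul_add, ih]
      push_cast
      ring
  have hsum := sum_half_le_finsum hw ((Finset.range n).image fun j : ℕ => x + j)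
  rw [Finset.sum_image fun i _ j _ hij => by simpa using hij] at hsum
  have hhalf : ∑ j ∈ Finset.range n, (g x - j) ≤ 2 * ∑ j ∈ Finset.range n, (g (x + j) + 1) / 2 := by
    rw [Finset.mul_sum]
    refine Finset.sum_le_sum fun j _ => ?_
    have := height_sub_le hw j
    omega
  have := hgauss n
  rw [hn] at *
  unfold siteCoins
  rw [hn]
  nlinarith

/-! ### The state at a geometric time -/

open Classical in
/-- Probability that the walker at the equality state of a geometric index of parameter `1 - z` is
at `x` with modified local time `g`. The index is positive, whence the exclusion of `aTilde`. -/
noncomputable def stateMass (z : ℝ) (x : ℤ) (g : ℤ → ℤ) : ℝ :=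
  if g = aTilde then 0 else (1 - z) * z ^ (siteCoins x g - 1) * siteWeight x g

lemma stateMass_nonneg (hz₀ : 0 < z) (hz₁ : z < 1) (x : ℤ) (g : ℤ → ℤ) :
    0 ≤ stateMass z x g := by
  unfold stateMass
  have := siteWeight_nonneg x g
  split_ifs <;> positivity

lemma stateMass_of_siteWeight_eq_zero (hw : siteWeight x g = 0) : stateMass z x g = 0 := by
  simp [stateMass, hw]

lemma siteCoins_neg (x : ℤ) (g : ℤ → ℤ) :
    siteCoins (-x) (fun y => g (-y)) = siteCoins x g := by
  rw [siteCoins, siteCoins, neg_neg, ← finsum_comp_equiv (Equiv.neg ℤ)]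
  simp

lemma stateMass_neg (z : ℝ) (x : ℤ) (g : ℤ → ℤ) :
    stateMass z (-x) (fun y => g (-y)) = stateMass z x g := by
  have hiff : (fun y => g (-y)) = aTilde ↔ g = aTilde := by
    have haTilde (y : ℤ) : aTilde (-y) = aTilde y := by simp only [aTilde_eq, dvd_neg]
    refine ⟨fun h => funext fun y => ?_, fun h => funext fun y => ?_⟩
    · rw [← haTilde, ← h]
      exact congrArg g (neg_neg y).symm
    · rw [h, haTilde]
  unfold stateMass
  rw [siteCoins_neg, siteWeight_neg]
  by_cases hg : g = aTilde
  · rw [if_pos (hiff.2 hg), if_pos hg]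
  · rw [if_neg (mt hiff.1 hg), if_neg hg]

end StateMass

/-! ### The discounted reflected walk -/

section DiscountedSurvival

/-- Expected discount over `n` steps of the simple random walk on `ℕ` reflected at `0`, started from
`h`, every visit of a height `k` being discounted by `z ^ ⌊(k + 1) / 2⌋`. -/
noncomputable def discountedSurvival (z : ℝ) : ℕ → ℤ → ℝ
  | 0, _ => 1
  | n + 1, h => z ^ ((h + 1) / 2).toNat *
      if h ≤ 0 then discountedSurvival z n 1
      else (discountedSurvival z n (h + 1) + discountedSurvival z n (h - 1)) / 2

/-- A supersolution of the recursion for the total discounted survival. The cosine has curvature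
below `-1` under height `2 * M`; above that height each step is discounted by at least `z ^ M`. -/
noncomputable def survivalBound (z : ℝ) (M : ℕ) (h : ℤ) : ℝ :=
  3 / (1 - z ^ M) + 2 / (1 - Real.cos (2 * M : ℝ)⁻¹) * (1 + Real.cos ((2 * M : ℝ)⁻¹ * h))

variable {z : ℝ} {M : ℕ}

lemma discountedSurvival_nonneg (hz : 0 ≤ z) (n : ℕ) (h : ℤ) : 0 ≤ discountedSurvival z n h := by
  induction n generalizing h with
  | zero => exact zero_le_one
  | succ n ih =>
    have h₁ := ih 1
    have h₂ := ih (h + 1)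
    have h₃ := ih (h - 1)
    unfold discountedSurvival
    split_ifs <;> positivity

lemma one_sub_cos_pos (hM : 1 ≤ M) : 0 < 1 - Real.cos (2 * M : ℝ)⁻¹ := by
  have hM' : (1 : ℝ) ≤ M := by exact_mod_cast hM
  have hθ : (2 * M : ℝ)⁻¹ ≤ 1 := inv_le_one_of_one_le₀ (by linarith)
  have := Real.cos_lt_cos_of_nonneg_of_le_pi le_rfl (by linarith [Real.pi_gt_three])
    (show (0 : ℝ) < (2 * M : ℝ)⁻¹ by positivity)
  rw [Real.cos_zero] at this
  linarith

lemma three_div_le_survivalBound (hM : 1 ≤ M) (h : ℤ) :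
    3 / (1 - z ^ M) ≤ survivalBound z M h :=
  le_add_of_nonneg_right (mul_nonneg (div_nonneg zero_le_two (one_sub_cos_pos hM).le)
    (by linarith [Real.neg_one_le_cos ((2 * M : ℝ)⁻¹ * h)]))

lemma survivalBound_add_survivalBound (hM : 1 ≤ M) (h : ℤ) :
    (survivalBound z M (h + 1) + survivalBound z M (h - 1)) / 2 =
      survivalBound z M h - 2 * Real.cos ((2 * M : ℝ)⁻¹ * h) := by
  have hcos := (one_sub_cos_pos hM).ne'
  unfold survivalBound
  push_cast
  rw [mul_add _ (h : ℝ), mul_sub _ (h : ℝ), mul_one, Real.cos_add, Real.cos_sub]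
  generalize Real.cos (2 * M : ℝ)⁻¹ = c at hcos ⊢
  generalize 3 / (1 - z ^ M) = D
  field_simp
  ring

lemma half_le_cos {h : ℤ} (h₀ : 0 ≤ h) (hh : h ≤ 2 * M) :
    1 / 2 ≤ Real.cos ((2 * M : ℝ)⁻¹ * h) := by
  have hh' : (h : ℝ) ≤ 2 * M := by exact_mod_cast hh
  have hle : (2 * M : ℝ)⁻¹ * h ≤ 1 := inv_mul_le_one_of_le₀ hh' (by positivity)
  rw [← Real.cos_pi_div_three]
  exact Real.cos_le_cos_of_nonneg_of_le_pi (by positivity) (by linarith [Real.pi_pos])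
    (by linarith [Real.pi_gt_three])

/-- Reflection at height `0` is absorbed by the symmetry of the cosine. -/
lemma one_add_mul_survivalBound_le (hz₀ : 0 < z) (hz₁ : z < 1) (hM : 1 ≤ M) {h : ℤ} (h₀ : 0 ≤ h) :
    1 + z ^ ((h + 1) / 2).toNat *
        (if h ≤ 0 then survivalBound z M 1
          else (survivalBound z M (h + 1) + survivalBound z M (h - 1)) / 2) ≤
      survivalBound z M h := by
  have hmean : (if h ≤ 0 then survivalBound z M 1
      else (survivalBound z M (h + 1) + survivalBound z M (h - 1)) / 2) =
      survivalBound z M h - 2 * Real.cos ((2 * M : ℝ)⁻¹ * h) := by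
    rw [← survivalBound_add_survivalBound hM]
    split_ifs with hh
    · obtain rfl := hh.antisymm h₀
      simp [survivalBound]
    · rfl
  have hq : z ^ M < 1 := pow_lt_one₀ hz₀.le hz₁ (by omega)
  have hD : 3 / (1 - z ^ M) * (1 - z ^ M) = 3 := div_mul_cancel₀ _ (by linarith)
  have hU := three_div_le_survivalBound (z := z) hM h
  have hU₀ : 3 ≤ survivalBound z M h * (1 - z ^ M) :=
    hD.ge.trans (mul_le_mul_of_nonneg_right hU (by linarith))
  have hnonneg : 0 ≤ survivalBound z M h - 2 * Real.cos ((2 * M : ℝ)⁻¹ * h) := by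
    have hD₀ : 0 < 3 / (1 - z ^ M) := div_pos three_pos (by linarith)
    rw [← survivalBound_add_survivalBound hM]
    linarith [three_div_le_survivalBound (z := z) hM (h + 1),
      three_div_le_survivalBound (z := z) hM (h - 1)]
  rw [hmean]
  rcases le_or_gt h (2 * M) with hh | hh
  · have := mul_le_of_le_one_left hnonneg (pow_le_one₀ (n := ((h + 1) / 2).toNat) hz₀.le hz₁.le)
    linarith [half_le_cos h₀ hh]
  · have hpow : z ^ ((h + 1) / 2).toNat ≤ z ^ M := pow_le_pow_of_le_one hz₀.le hz₁.le (by omega)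
    have := mul_le_mul_of_nonneg_right hpow hnonneg
    have := mul_le_mul_of_nonneg_left
      (show survivalBound z M h - 2 * Real.cos ((2 * M : ℝ)⁻¹ * h) ≤ survivalBound z M h + 2 by
        linarith [Real.neg_one_le_cos ((2 * M : ℝ)⁻¹ * h)]) (pow_pos hz₀ M).le
    linarith

lemma sum_discountedSurvival_le (hz₀ : 0 < z) (hz₁ : z < 1) (hM : 1 ≤ M) (N : ℕ) {h : ℤ}
    (h₀ : 0 ≤ h) : ∑ n ∈ Finset.range N, discountedSurvival z n h ≤ survivalBound z M h := by
  induction N generalizing h with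
  | zero =>
    have hq : z ^ M < 1 := pow_lt_one₀ hz₀.le hz₁ (by omega)
    exact (div_nonneg zero_le_three (by linarith)).trans (three_div_le_survivalBound hM h)
  | succ N ih =>
    rw [Finset.sum_range_succ', add_comm]
    refine le_trans ?_ (one_add_mul_survivalBound_le hz₀ hz₁ hM h₀)
    simp only [discountedSurvival]
    rw [← Finset.mul_sum]
    gcongr
    split_ifs with hh
    · exact ih zero_le_one
    · rw [← Finset.sum_div, Finset.sum_add_distrib]
      have := ih (show 0 ≤ h + 1 by omega)
      have := ih (show 0 ≤ h - 1 by omega)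
      linarith

end DiscountedSurvival

/-! ### The states of height zero -/

section ZeroMass

variable {x h : ℤ} {g : ℤ → ℤ} {z : ℝ}

/-- A step of the profile to the left of the origin, discounted by the coins of its height. -/
noncomputable def discountedStep (z : ℝ) (y a b : ℤ) : ℝ :=
  z ^ (if y < 0 then ((a + 1) / 2).toNat else 0) * stepWeight y a b

lemma discountedStep_nonneg (hz : 0 ≤ z) (y a b : ℤ) : 0 ≤ discountedStep z y a b :=
  mul_nonneg (pow_nonneg hz _) (stepWeight_nonneg y a b)

lemma discountedStep_mul_add_le (hz : 0 ≤ z) (x h : ℤ) :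
    discountedStep z x h (h + 1) * discountedSurvival z (-(x + 1)).toNat (h + 1) +
        discountedStep z x h (h - 1) * discountedSurvival z (-(x + 1)).toNat (h - 1) ≤
      discountedSurvival z (-x).toNat h := by
  rcases lt_or_ge x 0 with hx | hx
  · obtain ⟨n, hn⟩ : ∃ n : ℕ, -x = n + 1 := ⟨(-x - 1).toNat, by omega⟩
    have hV (k : ℤ) := discountedSurvival_nonneg hz n k
    have hstep : stepWeight x h (h + 1) * discountedSurvival z n (h + 1) +
          stepWeight x h (h - 1) * discountedSurvival z n (h - 1) ≤
        if h ≤ 0 then discountedSurvival z n 1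
          else (discountedSurvival z n (h + 1) + discountedSurvival z n (h - 1)) / 2 := by
      have hup := stepWeight_le_one x h (h + 1)
      obtain h0 | rfl | h0 := lt_trichotomy h 0
      · have hzero (b : ℤ) : stepWeight x h b = 0 := by
          by_contra hne
          have hs := stepWeight_ne_zero_iff.1 hne
          have := hs.neg_one_le
          have := hs.alternating
          omega
        simpa [hzero, h0.le] using hV 1
      · have hdown : stepWeight x 0 (0 - 1) = 0 := by
          rw [stepWeight_zero, if_neg (by omega)]
        rw [hdown, zero_mul, add_zero, if_pos le_rfl]
        exact mul_le_of_le_one_left (hV 1) hup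
      · have hhalf (b : ℤ) : stepWeight x h b ≤ 1 / 2 := by
          rw [stepWeight_of_one_le h0]
          split_ifs <;> norm_num
        rw [if_neg h0.not_ge]
        linarith [mul_le_mul_of_nonneg_right (hhalf (h + 1)) (hV (h + 1)),
          mul_le_mul_of_nonneg_right (hhalf (h - 1)) (hV (h - 1))]
    rw [show (-x).toNat = n + 1 by omega, show (-(x + 1)).toNat = n by omega, discountedSurvival,
      discountedStep, discountedStep, if_pos hx, mul_assoc, mul_assoc, ← mul_add]
    exact mul_le_mul_of_nonneg_left hstep (pow_nonneg hz _)
  · rw [show (-x).toNat = 0 by omega, show (-(x + 1)).toNat = 0 by omega]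
    unfold discountedStep discountedSurvival stepWeight
    split_ifs <;> first | omega | norm_num

lemma prod_discountedStep_succ {g : ℤ → ℤ} (m : ℕ) (hg : g x = h) :
    ∏ i ∈ Finset.range (m + 1), discountedStep z (x + i) (g (x + i)) (g (x + i + 1)) =
      ∑ k ∈ {h + 1, h - 1}, if g (x + 1) = k then discountedStep z x h k *
        ∏ i ∈ Finset.range m,
          discountedStep z (x + 1 + i) (g (x + 1 + i)) (g (x + 1 + i + 1)) else 0 := by
  rw [Finset.prod_range_succ', mul_comm, Finset.sum_ite_eq]
  simp only [Nat.cast_add, Nat.cast_one, Nat.cast_zero, add_zero, hg, add_comm (_ : ℤ) 1,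
    ← add_assoc]
  split_ifs with hk
  · rfl
  · have hzero : stepWeight x h (g (1 + x)) = 0 := by
      by_contra hne
      have := (stepWeight_ne_zero_iff.1 hne).adjacent
      simp only [Finset.mem_insert, Finset.mem_singleton] at hk
      omega
    rw [discountedStep, hzero, mul_zero, zero_mul]

lemma sum_prod_discountedStep_le (hz : 0 ≤ z) (m : ℕ) {T : Finset (ℤ → ℤ)} (hx : 0 ≤ x + m)
    (hTx : ∀ g ∈ T, g x = h)
    (hT : ∀ g ∈ T, ∀ g' ∈ T, ∀ y, y ≤ x ∨ x + m < y → g y = g' y) :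
    ∑ g ∈ T, ∏ i ∈ Finset.range m, discountedStep z (x + i) (g (x + i)) (g (x + i + 1)) ≤
      discountedSurvival z (-x).toNat h := by
  induction m generalizing x h T with
  | zero =>
    have hcard : T.card ≤ 1 := Finset.card_le_one.2 fun g hg g' hg' =>
      funext fun y => hT g hg g' hg' y (by omega)
    rw [show (-x).toNat = 0 by omega]
    simpa [discountedSurvival] using hcard
  | succ m ih =>
    rw [Finset.sum_congr rfl fun g hg => prod_discountedStep_succ m (hTx g hg), Finset.sum_comm]
    refine le_trans ?_ (discountedStep_mul_add_le hz x h)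
    rw [← Finset.sum_pair (show h + 1 ≠ h - 1 by omega) (f := fun k =>
      discountedStep z x h k * discountedSurvival z (-(x + 1)).toNat k)]
    refine Finset.sum_le_sum fun k _ => ?_
    rw [← Finset.sum_filter, ← Finset.mul_sum]
    refine mul_le_mul_of_nonneg_left (ih (by push_cast at hx; omega)
      (fun g hg => (Finset.mem_filter.1 hg).2) fun g hg g' hg' y hy => ?_)
      (discountedStep_nonneg hz x h k)
    rw [Finset.mem_filter] at hg hg'
    obtain rfl | hy : y = x + 1 ∨ y ≤ x ∨ x + (m + 1 : ℕ) < y := by push_cast; omega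
    · rw [hg.2, hg'.2]
    · exact hT g hg.1 g' hg'.1 y hy

lemma siteWeight_le_prod (hg : g =ᶠ[cofinite] aTilde) (x : ℤ) (m : ℕ) :
    siteWeight x g ≤ ∏ i ∈ Finset.range m, stepWeight (x + i) (g (x + i)) (g (x + i + 1)) := by
  have hbond (i : ℤ) : 0 ≤ bondWeight x g i ∧ bondWeight x g i ≤ 1 := by
    unfold bondWeight
    split_ifs <;> exact ⟨stepWeight_nonneg _ _ _, stepWeight_le_one _ _ _⟩
  have hfin := hasFiniteMulSupport_bondWeight hg x
  set R := (Finset.range m).image fun i : ℕ => x + i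
  calc siteWeight x g ≤ ∏ᶠ i, bondWeight x g i := by
        rw [siteWeight_eq hg]
        exact mul_le_of_le_one_left (finprod_nonneg fun i => (hbond i).1)
          (by unfold contactWeight; split_ifs <;> norm_num)
    _ = ∏ i ∈ R ∪ hfin.toFinset, bondWeight x g i :=
        finprod_eq_prod_of_mulSupport_subset _ (hfin.coe_toFinset.ge.trans (by simp))
    _ ≤ ∏ i ∈ R, bondWeight x g i :=
        Finset.prod_le_prod_of_subset_of_le_one Finset.subset_union_left
          (fun i _ => (hbond i).1) fun i _ _ => (hbond i).2
    _ = _ := by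
        rw [Finset.prod_image fun i _ j _ hij => by simpa using hij]
        exact Finset.prod_congr rfl fun i _ => if_pos (by omega)

lemma stateMass_le_prod (hz₀ : 0 < z) (hz₁ : z < 1) (hw : siteWeight x g ≠ 0) (hx : g x = 0)
    (m : ℕ) :
    stateMass z x g ≤ (1 - z) / z *
      ∏ i ∈ Finset.range m, discountedStep z (x + i) (g (x + i)) (g (x + i + 1)) := by
  have hprod := siteWeight_le_prod (eventuallyEq_aTilde_of_siteWeight_ne_zero hw) x m
  have hz : 0 ≤ (1 - z) / z := div_nonneg (sub_pos.2 hz₁).le hz₀.le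
  have hcoins : (∑ i ∈ Finset.range m,
      if x + i < 0 then ((g (x + i) + 1) / 2).toNat else 0 : ℕ) ≤ siteCoins x g := by
    have hsum := sum_half_le_finsum hw ((Finset.range m).image fun i : ℕ => x + i)
    rw [Finset.sum_image fun i _ j _ hij => by simpa using hij] at hsum
    rw [siteCoins, hx, add_zero]
    push_cast
    refine le_trans (Finset.sum_le_sum fun i _ => ?_) hsum
    have := neg_one_le_of_siteWeight_ne_zero hw (x + i)
    split_ifs <;> omega
  unfold stateMass
  split_ifs with hg
  · exact mul_nonneg hz (Finset.prod_nonneg fun i _ => discountedStep_nonneg hz₀.le _ _ _)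
  · simp only [discountedStep]
    rw [Finset.prod_mul_distrib, Finset.prod_pow_eq_pow_sum, zpow_sub_one₀ hz₀.ne',
      ← div_eq_mul_inv, mul_div_assoc', mul_comm (1 - z), ← mul_div_assoc', mul_comm (_ ^ _),
      mul_assoc]
    gcongr
    · exact siteWeight_nonneg x g
    · rw [← zpow_natCast]
      exact zpow_le_zpow_right_of_le_one₀ hz₀ hz₁.le hcoins

/-- To the left of a site of height zero on the negative side, the profile is alternating. -/
lemma eq_of_siteWeight_ne_zero_of_le {g' : ℤ → ℤ} (hx : x ≤ 0) (hw : siteWeight x g ≠ 0)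
    (hw' : siteWeight x g' ≠ 0) (hg : g x = 0) (hg' : g' x = 0) {y : ℤ} (hy : y ≤ x) :
    g y = g' y := by
  suffices g y = g' y ∧ g y ≤ 0 from this.1
  induction y, hy using Int.leInductionDown with
  | base => simp [hg, hg']
  | pred y hy ih =>
    have hs := isStep_sub_one hw hy
    have hs' := isStep_sub_one hw' hy
    have := hs.neg_one_le
    have := hs.absorbed
    have := hs'.absorbed
    have := hs.alternating
    have := hs'.alternating
    omega

lemma sum_stateMass_le (hz₀ : 0 < z) (hz₁ : z < 1) (hx : x ≤ 0) {T : Finset (ℤ → ℤ)}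
    (hT : ∀ g ∈ T, siteWeight x g ≠ 0 ∧ g x = 0) :
    ∑ g ∈ T, stateMass z x g ≤ (1 - z) / z * discountedSurvival z (-x).toNat 0 := by
  have hlarge : ∀ᶠ y in atTop, ∀ g ∈ T, g y = aTilde y := (Finset.eventually_all T).2 fun g hg =>
    atTop_le_cofinite (eventuallyEq_aTilde_of_siteWeight_ne_zero (hT g hg).1)
  obtain ⟨N, hN⟩ := eventually_atTop.1 hlarge
  obtain ⟨m, hm⟩ : ∃ m : ℕ, max N 0 - x = m := Int.eq_ofNat_of_zero_le (by omega)
  calc ∑ g ∈ T, stateMass z x g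
      ≤ ∑ g ∈ T, (1 - z) / z *
          ∏ i ∈ Finset.range m, discountedStep z (x + i) (g (x + i)) (g (x + i + 1)) :=
        Finset.sum_le_sum fun g hg => stateMass_le_prod hz₀ hz₁ (hT g hg).1 (hT g hg).2 m
    _ ≤ (1 - z) / z * discountedSurvival z (-x).toNat 0 := by
        rw [← Finset.mul_sum]
        refine mul_le_mul_of_nonneg_left (sum_prod_discountedStep_le hz₀.le m (by omega)
          (fun g hg => (hT g hg).2) fun g hg g' hg' y hy => ?_)
          (div_nonneg (sub_pos.2 hz₁).le hz₀.le)
        rcases hy with hy | hy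
        · exact eq_of_siteWeight_ne_zero_of_le hx (hT g hg).1 (hT g' hg').1 (hT g hg).2
            (hT g' hg').2 hy
        · rw [hN y (by omega) g hg, hN y (by omega) g' hg']

open Classical in
/-- Probability that the walker at the equality state of a geometric index of parameter `1 - z` is
at `x` with modified local time `g`, which vanishes at `x`. -/
noncomputable def zeroMass (z : ℝ) (x : ℤ) (g : ℤ → ℤ) : ℝ :=
  if g x = 0 then stateMass z x g else 0

lemma zeroMass_nonneg (hz₀ : 0 < z) (hz₁ : z < 1) (x : ℤ) (g : ℤ → ℤ) : 0 ≤ zeroMass z x g := by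
  unfold zeroMass
  split_ifs
  · exact stateMass_nonneg hz₀ hz₁ x g
  · exact le_rfl

lemma zeroMass_neg (z : ℝ) (x : ℤ) (g : ℤ → ℤ) :
    zeroMass z (-x) (fun y => g (-y)) = zeroMass z x g := by
  simp only [zeroMass, neg_neg, stateMass_neg]

lemma tsum_zeroMass_neg (z : ℝ) (x : ℤ) :
    ∑' g, ENNReal.ofReal (zeroMass z (-x) g) = ∑' g, ENNReal.ofReal (zeroMass z x g) := by
  rw [← ((Equiv.neg ℤ).arrowCongr (Equiv.refl ℤ)).tsum_eq]
  exact tsum_congr fun g => congrArg ENNReal.ofReal (zeroMass_neg z x g)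

lemma tsum_zeroMass_le (hz₀ : 0 < z) (hz₁ : z < 1) (n : ℕ) :
    ∑' g, ENNReal.ofReal (zeroMass z (-n) g) ≤
      ENNReal.ofReal ((1 - z) / z * discountedSurvival z n 0) := by
  refine ENNReal.summable.tsum_le_of_sum_le fun T => ?_
  rw [← ENNReal.ofReal_sum_of_nonneg fun g _ => zeroMass_nonneg hz₀ hz₁ _ g]
  refine ENNReal.ofReal_le_ofReal ?_
  classical
  have hsum : ∑ g ∈ T, zeroMass z (-n) g =
      ∑ g ∈ T with siteWeight (-n) g ≠ 0 ∧ g (-n) = 0, stateMass z (-n) g := by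
    rw [Finset.sum_filter]
    refine Finset.sum_congr rfl fun g _ => ?_
    by_cases hw : siteWeight (-n) g = 0
    · simp [hw, zeroMass, stateMass_of_siteWeight_eq_zero]
    · simp [hw, zeroMass]
  rw [hsum]
  refine (sum_stateMass_le hz₀ hz₁ (by omega) fun g hg => (Finset.mem_filter.1 hg).2).trans_eq ?_
  rw [neg_neg, Int.toNat_natCast]

lemma tsum_tsum_zeroMass_le {M : ℕ} (hz₀ : 0 < z) (hz₁ : z < 1) (hM : 1 ≤ M) :
    ∑' (x) (g), ENNReal.ofReal (zeroMass z x g) ≤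
      ENNReal.ofReal (2 * ((1 - z) / z * survivalBound z M 0)) := by
  have hz : 0 ≤ (1 - z) / z := div_nonneg (sub_pos.2 hz₁).le hz₀.le
  have hside : ∑' (n : ℕ) (g), ENNReal.ofReal (zeroMass z (-n) g) ≤
      ENNReal.ofReal ((1 - z) / z * survivalBound z M 0) := by
    refine (ENNReal.tsum_le_tsum fun n => tsum_zeroMass_le hz₀ hz₁ n).trans ?_
    refine ENNReal.tsum_le_of_sum_range_le fun N => ?_
    rw [← ENNReal.ofReal_sum_of_nonneg fun n _ =>
      mul_nonneg hz (discountedSurvival_nonneg hz₀.le n 0), ← Finset.mul_sum]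
    exact ENNReal.ofReal_le_ofReal
      (mul_le_mul_of_nonneg_left (sum_discountedSurvival_le hz₀ hz₁ hM N le_rfl) hz)
  have hbound : 0 ≤ (1 - z) / z * survivalBound z M 0 :=
    mul_nonneg hz (sum_discountedSurvival_le hz₀ hz₁ hM 0 le_rfl)
  rw [tsum_of_nat_of_neg_add_one ENNReal.summable ENNReal.summable, two_mul,
    ENNReal.ofReal_add hbound hbound]
  refine add_le_add ((tsum_congr fun n : ℕ => tsum_zeroMass_neg z n).ge.trans hside) ?_
  rw [tsum_eq_zero_add' ENNReal.summable] at hside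
  push_cast at hside
  exact le_add_self.trans hside

end ZeroMass

/-! ### The position given the profile -/

section PositionGivenProfile

variable {x m n : ℤ} {g : ℤ → ℤ} {z C : ℝ}

/-- The coins tossed on account of the height at the position itself make the state mass deviate
from the site weight. This is the mass gained by not discounting them. -/
noncomputable def discountError (z : ℝ) (x : ℤ) (g : ℤ → ℤ) : ℝ :=
  stateMass z x g * (z ^ (-g x) - 1)

lemma stateMass_mul_zpow (hz : z ≠ 0) (hg : g ≠ aTilde) (x : ℤ) :
    stateMass z x g * z ^ (-g x) =
      (1 - z) * z ^ (∑ᶠ y, (g y + 1) / 2 - 1) * siteWeight x g := by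
  rw [stateMass, if_neg hg, mul_right_comm, mul_assoc (1 - z), ← zpow_add₀ hz, siteCoins]
  ring_nf

lemma one_le_zpow_neg_height (hz₀ : 0 < z) (hz₁ : z < 1) (hw : siteWeight x g ≠ 0) :
    1 ≤ z ^ (-g x) :=
  one_le_zpow_of_nonpos₀ hz₀ hz₁.le (neg_nonpos.2 (nonneg_of_siteWeight_ne_zero hw))

lemma discountError_nonneg (hz₀ : 0 < z) (hz₁ : z < 1) (x : ℤ) (g : ℤ → ℤ) :
    0 ≤ discountError z x g := by
  by_cases hw : siteWeight x g = 0
  · simp [discountError, stateMass_of_siteWeight_eq_zero hw]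
  · exact mul_nonneg (stateMass_nonneg hz₀ hz₁ x g)
      (sub_nonneg.2 (one_le_zpow_neg_height hz₀ hz₁ hw))

namespace HasPlateau

lemma stateMass_le (h : HasPlateau g m n C) (hz₀ : 0 < z) (hz₁ : z < 1) (hg : g ≠ aTilde) (y : ℤ) :
    stateMass z y g ≤ (1 - z) * z ^ (∑ᶠ y, (g y + 1) / 2 - 1) * C + zeroMass z y g := by
  have hC := h.nonneg
  unfold zeroMass
  split_ifs with hy
  · exact le_add_of_nonneg_left (by positivity)
  · have hle := mul_le_mul_of_nonneg_left (h.siteWeight_le y hy)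
      (show 0 ≤ (1 - z) * z ^ (∑ᶠ y, (g y + 1) / 2 - 1) by positivity)
    rw [← stateMass_mul_zpow hz₀.ne' hg] at hle
    have := discountError_nonneg hz₀ hz₁ y g
    unfold discountError at this
    linarith

lemma mul_le_sum_stateMass (h : HasPlateau g m n C) (hz₀ : 0 < z) (hz₁ : z < 1) (hg : g ≠ aTilde) :
    (n + 1 - m) * ((1 - z) * z ^ (∑ᶠ y, (g y + 1) / 2 - 1) * C) ≤
      ∑ y ∈ Finset.Icc m n, (stateMass z y g + discountError z y g) := by
  have hterm (y : ℤ) : stateMass z y g + discountError z y g =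
      (1 - z) * z ^ (∑ᶠ y, (g y + 1) / 2 - 1) * siteWeight y g := by
    rw [← stateMass_mul_zpow hz₀.ne' hg, discountError]
    ring
  rw [Finset.sum_congr rfl fun y _ => hterm y, ← Finset.mul_sum, mul_left_comm]
  exact mul_le_mul_of_nonneg_left h.le_sum (by positivity)

lemma sum_stateMass_le (h : HasPlateau g m n C) (hz₀ : 0 < z) (hz₁ : z < 1) (hg : g ≠ aTilde)
    {S : Finset ℤ} (hS : S ⊆ Finset.Icc m n) :
    ∑ y ∈ S, stateMass z y g ≤ S.card / (n + 1 - m) * ∑ y ∈ Finset.Icc m n, stateMass z y g +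
      ∑ y ∈ Finset.Icc m n, (zeroMass z y g + discountError z y g) := by
  set c := (1 - z) * z ^ (∑ᶠ y, (g y + 1) / 2 - 1) * C
  have hlen : (0 : ℝ) < n + 1 - m := by exact_mod_cast (show 0 < n + 1 - m by linarith [h.le])
  have hratio : S.card / (n + 1 - m : ℝ) ≤ 1 := by
    rw [div_le_one hlen]
    have hcard := Finset.card_le_card hS
    rw [Int.card_Icc] at hcard
    exact_mod_cast (show (S.card : ℤ) ≤ n + 1 - m by have := h.le; omega)
  have hzero : ∑ y ∈ S, zeroMass z y g ≤ ∑ y ∈ Finset.Icc m n, zeroMass z y g :=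
    Finset.sum_le_sum_of_subset_of_nonneg hS fun y _ _ => zeroMass_nonneg hz₀ hz₁ y g
  have hdisc : 0 ≤ ∑ y ∈ Finset.Icc m n, discountError z y g :=
    Finset.sum_nonneg fun y _ => discountError_nonneg hz₀ hz₁ y g
  calc ∑ y ∈ S, stateMass z y g ≤ ∑ y ∈ S, (c + zeroMass z y g) :=
        Finset.sum_le_sum fun y _ => h.stateMass_le hz₀ hz₁ hg y
    _ = S.card / (n + 1 - m) * ((n + 1 - m) * c) + ∑ y ∈ S, zeroMass z y g := by
        rw [Finset.sum_add_distrib, Finset.sum_const, nsmul_eq_mul, ← mul_assoc (_ / _),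
          div_mul_cancel₀ _ hlen.ne']
    _ ≤ S.card / (n + 1 - m) * (∑ y ∈ Finset.Icc m n, stateMass z y g +
          ∑ y ∈ Finset.Icc m n, discountError z y g) + ∑ y ∈ Finset.Icc m n, zeroMass z y g := by
        rw [← Finset.sum_add_distrib]
        gcongr
        exact h.mul_le_sum_stateMass hz₀ hz₁ hg
    _ ≤ _ := by
        rw [mul_add, Finset.sum_add_distrib, add_right_comm, add_assoc]
        linarith [mul_le_of_le_one_left hdisc hratio]

end HasPlateau

end PositionGivenProfile

/-! ### The discount error -/

section DiscountGap

variable {x : ℤ} {g : ℤ → ℤ} {w : ℝ}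

/-- Up to the `k + 1`-st coin the height is of order `√k`, so undiscounting the coins of the height
costs at most a fraction `1 / (M + 1)` of the coins, up to a constant. With `z = w ^ (M + 1)` this
bounds the discount error at index `k + 1`. -/
noncomputable def discountGap (w : ℝ) (M k : ℕ) : ℝ :=
  (1 - w ^ (M + 1)) * (w ^ (M * k - (1 + (M + 1) ^ 2) : ℤ) - (w ^ (M + 1)) ^ k)

lemma zpow_sub_le_zpow (hw₀ : 0 < w) (hw₁ : w < 1) (M : ℕ) {k : ℕ} {h : ℤ}
    (hh : h ^ 2 ≤ 4 * (k + 1)) :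
    (w ^ (M + 1)) ^ (k - h : ℤ) ≤ w ^ (M * k - (1 + (M + 1) ^ 2) : ℤ) := by
  rw [← zpow_natCast, ← zpow_mul]
  refine zpow_le_zpow_right_of_le_one₀ hw₀ hw₁.le ?_
  push_cast
  nlinarith [sq_nonneg (2 * (M + 1) - h : ℤ)]

lemma discountGap_nonneg (hw₀ : 0 < w) (hw₁ : w < 1) (M k : ℕ) : 0 ≤ discountGap w M k := by
  have := zpow_sub_le_zpow hw₀ hw₁ M (k := k) (h := 0) (by positivity)
  rw [sub_zero, zpow_natCast] at this
  exact mul_nonneg (sub_nonneg.2 (pow_le_one₀ hw₀.le hw₁.le)) (sub_nonneg.2 this)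

lemma hasSum_discountGap (hw₀ : 0 < w) (hw₁ : w < 1) {M : ℕ} (hM : 1 ≤ M) :
    HasSum (discountGap w M)
      ((1 - w ^ (M + 1)) / (1 - w ^ M) * w ^ (-(1 + (M + 1) ^ 2) : ℤ) - 1) := by
  have hlt {j : ℕ} (hj : j ≠ 0) : w ^ j < 1 := pow_lt_one₀ hw₀.le hw₁ hj
  have hgeom₁ := hasSum_geometric_of_lt_one (pow_pos hw₀ M).le (hlt (by omega : M ≠ 0))
  have hgeom₂ := hasSum_geometric_of_lt_one (pow_pos hw₀ (M + 1)).le (hlt (M.succ_ne_zero))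
  have hsum := ((hgeom₁.mul_right (w ^ (-(1 + (M + 1) ^ 2) : ℤ))).sub hgeom₂).mul_left
    (1 - w ^ (M + 1))
  rw [mul_sub, mul_inv_cancel₀ (sub_pos.2 (hlt M.succ_ne_zero)).ne', ← mul_assoc,
    ← div_eq_mul_inv] at hsum
  refine hsum.congr_fun fun k => ?_
  rw [discountGap, sub_eq_add_neg (_ : ℤ), zpow_add₀ hw₀.ne', ← Nat.cast_mul, zpow_natCast, pow_mul]

variable {P : Measure (ℕ → Bool)} [IsProbabilityMeasure P]

lemma discountError_le (hP : IsFairCoins P) (hw₀ : 0 < w) (hw₁ : w < 1) (M : ℕ)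
    (hw : siteWeight x g ≠ 0) {k : ℕ} (hk : siteCoins x g = k + 1) :
    discountError (w ^ (M + 1)) x g ≤ discountGap w M k * P.real (eqStateEvent (k + 1) x g) := by
  have hz₀ : 0 < w ^ (M + 1) := pow_pos hw₀ _
  have hz₁ : 0 ≤ 1 - w ^ (M + 1) := sub_nonneg.2 (pow_le_one₀ hw₀.le hw₁.le)
  have hg : g ≠ aTilde := by
    rintro rfl
    have := siteCoins_aTilde hw
    omega
  have hle := zpow_sub_le_zpow hw₀ hw₁ M (hk ▸ sq_height_le hw)
  rw [measureReal_eqStateEvent hP, if_pos (by exact_mod_cast hk), discountError, stateMass,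
    if_neg hg, hk, add_sub_cancel_right, mul_right_comm _ (siteWeight x g), mul_assoc (1 - _),
    mul_sub, mul_one, ← zpow_add₀ hz₀.ne', ← sub_eq_add_neg, zpow_natCast]
  exact mul_le_mul_of_nonneg_right (mul_le_mul_of_nonneg_left (sub_le_sub_right hle _) hz₁)
    (siteWeight_nonneg x g)

lemma tsum_eqStateEvent_le_one (k : ℕ) :
    ∑' p : ℤ × (ℤ → ℤ), P (eqStateEvent k p.1 p.2) ≤ 1 := by
  refine (tsum_measure_le_measure_univ
    (fun p : ℤ × (ℤ → ℤ) => (measurableSet_eqStateEvent k p.1 p.2).nullMeasurableSet)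
    fun p q hpq => (disjoint_left.2 fun ω hp hq => hpq ?_).aedisjoint).trans_eq measure_univ
  exact Prod.ext (hp.1.symm.trans hq.1) (hp.2.symm.trans hq.2)

lemma tsum_discountError_le (hP : IsFairCoins P) (hw₀ : 0 < w) (hw₁ : w < 1) {M : ℕ} (hM : 1 ≤ M) :
    ∑' p : ℤ × (ℤ → ℤ), ENNReal.ofReal (discountError (w ^ (M + 1)) p.1 p.2) ≤
      ENNReal.ofReal ((1 - w ^ (M + 1)) / (1 - w ^ M) * w ^ (-(1 + (M + 1) ^ 2) : ℤ) - 1) := by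
  have hterm (p : ℤ × (ℤ → ℤ)) : ENNReal.ofReal (discountError (w ^ (M + 1)) p.1 p.2) ≤
      ∑' k, ENNReal.ofReal (discountGap w M k) * P (eqStateEvent (k + 1) p.1 p.2) := by
    by_cases hw : siteWeight p.1 p.2 = 0
    · simp [discountError, stateMass_of_siteWeight_eq_zero hw]
    by_cases hg : p.2 = aTilde
    · simp [discountError, stateMass, hg]
    obtain ⟨k, hk⟩ : ∃ k : ℕ, siteCoins p.1 p.2 = k + 1 :=
      ⟨(siteCoins p.1 p.2 - 1).toNat, by have := one_le_siteCoins hw hg; omega⟩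
    refine le_trans ?_ (ENNReal.le_tsum k)
    rw [← ofReal_measureReal, ← ENNReal.ofReal_mul (discountGap_nonneg hw₀ hw₁ M k)]
    exact ENNReal.ofReal_le_ofReal (discountError_le hP hw₀ hw₁ M hw hk)
  have hsum := hasSum_discountGap hw₀ hw₁ hM
  refine (ENNReal.tsum_le_tsum hterm).trans ?_
  rw [ENNReal.tsum_comm, ← hsum.tsum_eq,
    ENNReal.ofReal_tsum_of_nonneg (discountGap_nonneg hw₀ hw₁ M) hsum.summable]
  refine ENNReal.tsum_le_tsum fun k => ?_
  rw [ENNReal.tsum_mul_left]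
  exact mul_le_of_le_one_right' (tsum_eqStateEvent_le_one (k + 1))

end DiscountGap

/-! ### Uniform points of the admissible interval -/

section Comparison

variable {g : ℤ → ℤ} {z w : ℝ} {m n : ℤ} {C : ℝ}

/-- The `⌈u * #I(g)⌉`-th smallest element of `I(g)`, so that `u_A` is the pick at `U` from
`I(γ_A)`. -/
noncomputable def intervalPick (g : ℤ → ℤ) (u : ℝ) : ℤ :=
  sInf (interI g) + ⌈u * ((interI g).ncard : ℝ)⌉ - 1

lemma measurable_intervalPick (g : ℤ → ℤ) : Measurable (intervalPick g) :=
  ((Int.measurable_ceil.comp (measurable_id.mul_const _)).const_add _).sub_const _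

instance isProbabilityMeasure_unitInterval :
    IsProbabilityMeasure (volume.restrict (Icc (0 : ℝ) 1)) :=
  ⟨by simp⟩

lemma HasPlateau.intervalPick_preimage (h : HasPlateau g m n C) (x : ℤ) :
    intervalPick g ⁻¹' {x} = Ioc ((x - m) / (n + 1 - m) : ℝ) ((x - m + 1) / (n + 1 - m)) := by
  have hlen : (0 : ℝ) < n + 1 - m := by have := h.le; exact_mod_cast (by omega : 0 < n + 1 - m)
  have hcard : ((Icc m n).ncard : ℝ) = n + 1 - m := by
    rw [← Finset.coe_Icc, ncard_coe_finset, Int.card_Icc, ← Int.cast_natCast,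
      Int.toNat_of_nonneg (by have := h.le; omega)]
    push_cast
    ring
  ext u
  rw [mem_preimage, mem_singleton_iff, intervalPick, h.interI_eq, csInf_Icc h.le, hcard, mem_Ioc,
    div_lt_iff₀ hlen, le_div_iff₀ hlen]
  have : m + ⌈u * (n + 1 - m : ℝ)⌉ - 1 = x ↔ ⌈u * (n + 1 - m : ℝ)⌉ = x - m + 1 := by omega
  rw [this, Int.ceil_eq_iff]
  push_cast
  rw [add_sub_cancel_right]

lemma HasPlateau.ofReal_card_div_le (h : HasPlateau g m n C) {E : Set ℤ} {S : Finset ℤ}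
    (hS : S ⊆ Finset.Icc m n) (hSE : ↑S ⊆ E) :
    ENNReal.ofReal (S.card / (n + 1 - m)) ≤
      volume.restrict (Icc (0 : ℝ) 1) (intervalPick g ⁻¹' E) := by
  have hlen : (0 : ℝ) < n + 1 - m := by have := h.le; exact_mod_cast (by omega : 0 < n + 1 - m)
  have hpoint : ∀ x ∈ S, volume.restrict (Icc (0 : ℝ) 1) (intervalPick g ⁻¹' {x}) =
      ENNReal.ofReal (1 / (n + 1 - m)) := by
    intro x hx
    obtain ⟨hmx, hxn⟩ := Finset.mem_Icc.1 (hS hx)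
    have hsub : intervalPick g ⁻¹' {x} ⊆ Icc 0 1 := by
      rw [h.intervalPick_preimage]
      refine Ioc_subset_Icc_self.trans (Icc_subset_Icc ?_ ?_)
      · exact div_nonneg (by exact_mod_cast sub_nonneg.2 hmx) hlen.le
      · rw [div_le_one hlen]
        exact_mod_cast (by omega : x - m + 1 ≤ n + 1 - m)
    rw [Measure.restrict_eq_self _ hsub, h.intervalPick_preimage, Real.volume_Ioc, ← sub_div,
      add_sub_cancel_left]
  refine le_trans (le_of_eq ?_) (measure_mono (preimage_mono hSE))
  rw [← sum_measure_preimage_singleton S fun x _ =>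
      measurable_intervalPick g (measurableSet_singleton x),
    Finset.sum_congr rfl hpoint, Finset.sum_const, nsmul_eq_mul, div_eq_mul_one_div,
    ENNReal.ofReal_mul (Nat.cast_nonneg _), ENNReal.ofReal_natCast]

lemma tsum_ofReal_eq_ofReal_sum {ι : Type*} {f : ι → ℝ} {s : Finset ι} (hf : ∀ i, 0 ≤ f i)
    (hs : ∀ i ∉ s, f i = 0) :
    ∑' i, ENNReal.ofReal (f i) = ENNReal.ofReal (∑ i ∈ s, f i) := by
  rw [tsum_eq_sum fun i hi => by rw [hs i hi, ENNReal.ofReal_zero],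
    ENNReal.ofReal_sum_of_nonneg fun i _ => hf i]

lemma tsum_stateMass_le (hz₀ : 0 < z) (hz₁ : z < 1) (g : ℤ → ℤ) (E : Set ℤ) :
    ∑' x, volume.restrict (Icc (0 : ℝ) 1) {_u | x ∈ E} * ENNReal.ofReal (stateMass z x g) ≤
      ∑' x, volume.restrict (Icc (0 : ℝ) 1) (intervalPick g ⁻¹' E) *
          ENNReal.ofReal (stateMass z x g) +
        ∑' x, ENNReal.ofReal (zeroMass z x g) + ∑' x, ENNReal.ofReal (discountError z x g) := by
  classical
  by_cases hmass : ∀ x, stateMass z x g = 0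
  · simp [hmass]
  push Not at hmass
  obtain ⟨x₀, hx₀⟩ := hmass
  have hg : g ≠ aTilde := fun hg => hx₀ (by rw [stateMass, if_pos hg])
  obtain ⟨m, n, C, h⟩ := exists_hasPlateau (mt stateMass_of_siteWeight_eq_zero hx₀) hg
  have hout : ∀ x ∉ Finset.Icc m n, stateMass z x g = 0 := fun x hx =>
    stateMass_of_siteWeight_eq_zero (h.siteWeight_eq_zero x (by simpa using hx))
  have hmass₀ := fun x => stateMass_nonneg hz₀ hz₁ x g
  set S := (Finset.Icc m n).filter (· ∈ E)
  have hlhs : ∑' x, volume.restrict (Icc (0 : ℝ) 1) {_u | x ∈ E} *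
      ENNReal.ofReal (stateMass z x g) = ENNReal.ofReal (∑ x ∈ S, stateMass z x g) := by
    rw [Finset.sum_filter, ← tsum_ofReal_eq_ofReal_sum]
    · exact tsum_congr fun x => by by_cases hx : x ∈ E <;> simp [hx]
    · intro x
      split_ifs <;> simp [hmass₀]
    · exact fun x hx => by simp [hout x hx]
  have hzero₀ := fun x => zeroMass_nonneg hz₀ hz₁ x g
  have herr₀ := fun x => discountError_nonneg hz₀ hz₁ x g
  have hlen : (0 : ℝ) ≤ S.card / (n + 1 - m) := by
    have := h.le
    exact div_nonneg (Nat.cast_nonneg _) (by exact_mod_cast (by omega : 0 ≤ n + 1 - m))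
  rw [hlhs, ENNReal.tsum_mul_left, tsum_ofReal_eq_ofReal_sum hmass₀ hout,
    tsum_ofReal_eq_ofReal_sum hzero₀ fun x hx => by rw [zeroMass, hout x hx, ite_self],
    tsum_ofReal_eq_ofReal_sum herr₀ fun x hx => by rw [discountError, hout x hx, zero_mul],
    add_assoc, ← ENNReal.ofReal_add (Finset.sum_nonneg fun x _ => hzero₀ x)
      (Finset.sum_nonneg fun x _ => herr₀ x), ← Finset.sum_add_distrib]
  refine (ENNReal.ofReal_le_ofReal
    (h.sum_stateMass_le hz₀ hz₁ hg (Finset.filter_subset _ _))).trans ?_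
  refine ENNReal.ofReal_add_le.trans ?_
  rw [ENNReal.ofReal_mul hlen]
  gcongr
  exact h.ofReal_card_div_le (Finset.filter_subset _ _) fun x hx => (Finset.mem_filter.1 hx).2

/-! ### Comparison of the laws -/

/-- `ν` is the law on the positive integers with geometric weights of ratio `z`. -/
structure IsGeometric (ν : Measure ℕ) (z : ℝ) : Prop where
  zero : ν {0} = 0
  succ (k : ℕ) : ν {k + 1} = ENNReal.ofReal ((1 - z) * z ^ k)

lemma countable_eventuallyEq_cofinite {α β : Type*} [Countable α] [Countable β] [AddGroup β]
    (f : α → β) :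
    {g : α → β | g =ᶠ[cofinite] f}.Countable := by
  refine (countable_range fun (d : α →₀ β) a => d a + f a).mono fun g hg => ?_
  have hfin : (Function.support (g - f)).Finite := by
    refine (eventually_cofinite.1 hg).subset fun a ha hga => ha ?_
    rw [Pi.sub_apply, hga, sub_self]
  exact ⟨Finsupp.ofSupportFinite _ hfin, funext fun a => sub_add_cancel (g a) (f a)⟩

variable {P : Measure (ℕ → Bool)} [IsProbabilityMeasure P] {ν : Measure ℕ} [SFinite ν]
  {κ : Measure ℝ} [SFinite κ]

/-- The samples for which the walk is in the state `p` and the uniform variable lies in `B`. -/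
def sampleEvent (p : ℤ × (ℤ → ℤ)) (B : Set ℝ) : Set ((ℕ → Bool) × ℕ × ℝ) :=
  {ω | (xRV ω, gammaRV ω) = p ∧ ω.2.2 ∈ B}

lemma sampleEvent_eq_prod (p : ℤ × (ℤ → ℤ)) (B : Set ℝ) :
    sampleEvent p B = eqStateEvent (siteCoins p.1 p.2).toNat p.1 p.2 ×ˢ
      ({(siteCoins p.1 p.2).toNat} ×ˢ B) := by
  ext ⟨ω, k, u⟩
  constructor
  · rintro ⟨rfl, hu⟩
    have hω : ω ∈ eqStateEvent k (xRV (ω, k, u)) (gammaRV (ω, k, u)) := ⟨rfl, rfl⟩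
    have hk := siteCoins_of_mem_eqStateEvent hω
    rw [hk, Int.toNat_natCast]
    exact ⟨hω, rfl, hu⟩
  · rintro ⟨hω, rfl, hu⟩
    exact ⟨Prod.ext hω.1 hω.2, hu⟩

lemma measurableSet_sampleEvent (p : ℤ × (ℤ → ℤ)) {B : Set ℝ} (hB : MeasurableSet B) :
    MeasurableSet (sampleEvent p B) := by
  rw [sampleEvent_eq_prod]
  exact (measurableSet_eqStateEvent _ _ _).prod ((measurableSet_singleton _).prod hB)

lemma measure_sampleEvent (hP : IsFairCoins P) (hν : IsGeometric ν z) (hz₀ : 0 ≤ z) (hz₁ : z ≤ 1)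
    (p : ℤ × (ℤ → ℤ)) (B : Set ℝ) :
    P.prod (ν.prod κ) (sampleEvent p B) = κ B * ENNReal.ofReal (stateMass z p.1 p.2) := by
  rw [sampleEvent_eq_prod, Measure.prod_prod, Measure.prod_prod,
    ← ofReal_measureReal (μ := P), measureReal_eqStateEvent hP]
  by_cases hw : siteWeight p.1 p.2 = 0
  · simp [hw, stateMass_of_siteWeight_eq_zero hw]
  by_cases hg : p.2 = aTilde
  · rw [hg] at hw ⊢
    simp [siteCoins_aTilde hw, hν.zero, stateMass]
  obtain ⟨k, hk⟩ : ∃ k : ℕ, siteCoins p.1 p.2 = k + 1 :=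
    ⟨(siteCoins p.1 p.2 - 1).toNat, by have := one_le_siteCoins hw hg; omega⟩
  rw [stateMass, if_neg hg, hk, Int.toNat_natCast_add_one, hν.succ, if_pos (by push_cast; rfl),
    add_sub_cancel_right, zpow_natCast,
    ENNReal.ofReal_mul (mul_nonneg (sub_nonneg.2 hz₁) (pow_nonneg hz₀ k))]
  ring

lemma setOf_mem_eq_biUnion_sampleEvent (B : ℤ × (ℤ → ℤ) → Set ℝ) :
    {ω | ω.2.2 ∈ B (xRV ω, gammaRV ω)} =
      ⋃ p ∈ {p : ℤ × (ℤ → ℤ) | p.2 =ᶠ[cofinite] aTilde}, sampleEvent p (B p) := by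
  ext ω
  simp only [mem_iUnion, exists_prop]
  constructor
  · exact fun h => ⟨(xRV ω, gammaRV ω), modLoc_eventuallyEq _ _, rfl, h⟩
  · rintro ⟨p, -, rfl, h⟩
    exact h

lemma countable_states : {p : ℤ × (ℤ → ℤ) | p.2 =ᶠ[cofinite] aTilde}.Countable :=
  (countable_univ.prod (countable_eventuallyEq_cofinite aTilde)).mono fun p hp =>
    mk_mem_prod (mem_univ p.1) hp

lemma measurableSet_setOf_mem {B : ℤ × (ℤ → ℤ) → Set ℝ} (hB : ∀ p, MeasurableSet (B p)) :
    MeasurableSet {ω : (ℕ → Bool) × ℕ × ℝ | ω.2.2 ∈ B (xRV ω, gammaRV ω)} := by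
  rw [setOf_mem_eq_biUnion_sampleEvent]
  exact .biUnion countable_states fun p _ => measurableSet_sampleEvent p (hB p)

lemma measure_setOf_mem (hP : IsFairCoins P) (hν : IsGeometric ν z) (hz₀ : 0 ≤ z) (hz₁ : z ≤ 1)
    {B : ℤ × (ℤ → ℤ) → Set ℝ} (hB : ∀ p, MeasurableSet (B p)) :
    P.prod (ν.prod κ) {ω | ω.2.2 ∈ B (xRV ω, gammaRV ω)} =
      ∑' g, ∑' x, κ (B (x, g)) * ENNReal.ofReal (stateMass z x g) := by
  rw [setOf_mem_eq_biUnion_sampleEvent, measure_biUnion countable_states]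
  · simp only [measure_sampleEvent hP hν hz₀ hz₁]
    rw [tsum_subtype _ fun p : ℤ × (ℤ → ℤ) => κ (B p) * ENNReal.ofReal (stateMass z p.1 p.2),
      indicator_eq_self.2, ENNReal.tsum_prod', ENNReal.tsum_comm]
    intro p hp
    refine eventuallyEq_aTilde_of_siteWeight_ne_zero (x := p.1) fun hw => hp ?_
    simp [stateMass_of_siteWeight_eq_zero hw]
  · exact fun p _ q _ hpq => disjoint_left.2 fun ω hp hq => hpq (hp.1.symm.trans hq.1)
  · exact fun p _ => measurableSet_sampleEvent p (hB p)

lemma measurable_state :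
    Measurable fun ω : (ℕ → Bool) × ℕ × ℝ => (xRV ω, gammaRV ω) := fun E _ =>
  measurableSet_setOf_mem (B := fun p => {_u | p ∈ E}) fun _ => .const _

lemma measurable_resampledState :
    Measurable fun ω : (ℕ → Bool) × ℕ × ℝ => (uRV ω, gammaRV ω) := fun E _ =>
  measurableSet_setOf_mem (B := fun p => intervalPick p.2 ⁻¹' {y | (y, p.2) ∈ E}) fun p =>
    measurable_intervalPick p.2 .of_discrete

/-- The bound on the total variation distance for the geometric ratio `w ^ (M + 1)`: the mass of
the states at height zero plus the discount error. -/
noncomputable def couplingError (M : ℕ) (w : ℝ) : ℝ :=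
  2 * ((1 - w ^ (M + 1)) / w ^ (M + 1) * survivalBound (w ^ (M + 1)) M 0) +
    ((1 - w ^ (M + 1)) / (1 - w ^ M) * w ^ (-(1 + (M + 1) ^ 2) : ℤ) - 1)

lemma survivalBound_zero (z : ℝ) (M : ℕ) :
    survivalBound z M 0 = 3 / (1 - z ^ M) + 4 / (1 - Real.cos (2 * M : ℝ)⁻¹) := by
  rw [survivalBound, Int.cast_zero, mul_zero, Real.cos_zero]
  ring

lemma zeroBound_nonneg (hz₀ : 0 < z) (hz₁ : z < 1) {M : ℕ} (hM : 1 ≤ M) :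
    0 ≤ 2 * ((1 - z) / z * survivalBound z M 0) := by
  have hcos := one_sub_cos_pos hM
  have hpow : 0 < 1 - z ^ M := sub_pos.2 (pow_lt_one₀ hz₀.le hz₁ (by omega))
  rw [survivalBound_zero]
  positivity

lemma discountBound_nonneg (hw₀ : 0 < w) (hw₁ : w < 1) {M : ℕ} (hM : 1 ≤ M) :
    0 ≤ (1 - w ^ (M + 1)) / (1 - w ^ M) * w ^ (-(1 + (M + 1) ^ 2) : ℤ) - 1 :=
  (hasSum_discountGap hw₀ hw₁ hM).nonneg (discountGap_nonneg hw₀ hw₁ M)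

lemma tsum_zeroMass_add_discountError_le (hP : IsFairCoins P) (hw₀ : 0 < w) (hw₁ : w < 1) {M : ℕ}
    (hM : 1 ≤ M) :
    ∑' g, (∑' x, ENNReal.ofReal (zeroMass (w ^ (M + 1)) x g) +
      ∑' x, ENNReal.ofReal (discountError (w ^ (M + 1)) x g)) ≤
      ENNReal.ofReal (couplingError M w) := by
  have hz₀ : 0 < w ^ (M + 1) := pow_pos hw₀ _
  have hz₁ : w ^ (M + 1) < 1 := pow_lt_one₀ hw₀.le hw₁ M.succ_ne_zero
  have hzero := tsum_tsum_zeroMass_le hz₀ hz₁ hM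
  have hdisc := tsum_discountError_le hP hw₀ hw₁ hM
  rw [ENNReal.tsum_prod' (f := fun p : ℤ × (ℤ → ℤ) => _)] at hdisc
  rw [ENNReal.tsum_add, ENNReal.tsum_comm, ENNReal.tsum_comm (f := fun g x =>
    ENNReal.ofReal (discountError _ x g)), couplingError, ENNReal.ofReal_add]
  · exact add_le_add hzero hdisc
  · exact zeroBound_nonneg hz₀ hz₁ hM
  · exact discountBound_nonneg hw₀ hw₁ hM

lemma measure_state_le (hP : IsFairCoins P) (hw₀ : 0 < w) (hw₁ : w < 1) {M : ℕ} (hM : 1 ≤ M)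
    (hν : IsGeometric ν (w ^ (M + 1))) (E : Set (ℤ × (ℤ → ℤ))) :
    P.prod (ν.prod (volume.restrict (Icc 0 1))) ((fun ω => (xRV ω, gammaRV ω)) ⁻¹' E) ≤
      P.prod (ν.prod (volume.restrict (Icc 0 1))) ((fun ω => (uRV ω, gammaRV ω)) ⁻¹' E) +
        ENNReal.ofReal (couplingError M w) := by
  have hz₀ : 0 < w ^ (M + 1) := pow_pos hw₀ _
  have hz₁ : w ^ (M + 1) < 1 := pow_lt_one₀ hw₀.le hw₁ M.succ_ne_zero
  have hstate := measure_setOf_mem hP hν hz₀.le hz₁.le (κ := volume.restrict (Icc 0 1))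
    (B := fun p => {_u | p ∈ E}) fun _ => .const _
  have hresampled := measure_setOf_mem hP hν hz₀.le hz₁.le (κ := volume.restrict (Icc 0 1))
    (B := fun p => intervalPick p.2 ⁻¹' {y | (y, p.2) ∈ E}) fun p =>
      measurable_intervalPick p.2 .of_discrete
  refine hstate.trans_le (le_trans ?_ (add_le_add hresampled.ge
    (tsum_zeroMass_add_discountError_le hP hw₀ hw₁ hM)))
  rw [← ENNReal.tsum_add]
  simp only [← add_assoc]
  exact ENNReal.tsum_le_tsum fun g => tsum_stateMass_le hz₀ hz₁ g {x | (x, g) ∈ E}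

lemma tvDist_le_of_forall_le {α : Type*} [MeasurableSpace α] {μ μ' : Measure α}
    [IsProbabilityMeasure μ] [IsProbabilityMeasure μ'] {c : ℝ}
    (h : ∀ E, MeasurableSet E → μ'.real E ≤ μ.real E + c) : tvDist μ μ' ≤ c := by
  have : Nonempty {E : Set α // MeasurableSet E} := ⟨⟨∅, .empty⟩⟩
  refine ciSup_le fun ⟨E, hE⟩ => abs_sub_le_iff.2 ⟨?_, ?_⟩
  · have hcompl := h Eᶜ hE.compl
    rw [probReal_compl_eq_one_sub hE, probReal_compl_eq_one_sub hE] at hcompl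
    change μ.real E - μ'.real E ≤ c
    linarith
  · exact sub_le_iff_le_add'.2 (h E hE)

lemma tvDist_nonneg {α : Type*} [MeasurableSpace α] (μ ν : Measure α) : 0 ≤ tvDist μ ν :=
  Real.iSup_nonneg fun _ => abs_nonneg _

lemma tvDist_resampledState_le [IsProbabilityMeasure ν] (hP : IsFairCoins P) (hw₀ : 0 < w)
    (hw₁ : w < 1) {M : ℕ} (hM : 1 ≤ M) (hν : IsGeometric ν (w ^ (M + 1))) :
    tvDist
      ((P.prod (ν.prod (volume.restrict (Icc (0 : ℝ) 1)))).map fun ω => (uRV ω, gammaRV ω))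
      ((P.prod (ν.prod (volume.restrict (Icc (0 : ℝ) 1)))).map fun ω => (xRV ω, gammaRV ω)) ≤
      couplingError M w := by
  have := Measure.isProbabilityMeasure_map
    (μ := P.prod (ν.prod (volume.restrict (Icc 0 1)))) measurable_state.aemeasurable
  have := Measure.isProbabilityMeasure_map
    (μ := P.prod (ν.prod (volume.restrict (Icc 0 1)))) measurable_resampledState.aemeasurable
  refine tvDist_le_of_forall_le fun E hE => ?_
  rw [map_measureReal_apply measurable_state hE, map_measureReal_apply measurable_resampledState hE]
  have hle := measure_state_le hP hw₀ hw₁ hM hν E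
  have herr : 0 ≤ couplingError M w := add_nonneg
    (zeroBound_nonneg (pow_pos hw₀ _) (pow_lt_one₀ hw₀.le hw₁ M.succ_ne_zero) hM)
    (discountBound_nonneg hw₀ hw₁ hM)
  rw [← ofReal_measureReal, ← ofReal_measureReal,
    ← ENNReal.ofReal_add measureReal_nonneg herr] at hle
  exact (ENNReal.ofReal_le_ofReal_iff (add_nonneg measureReal_nonneg herr)).1 hle

/-! ### The limit -/

lemma tendsto_one_sub_pow_div (a : ℕ) {b : ℕ} (hb : b ≠ 0) :
    Tendsto (fun w : ℝ => (1 - w ^ a) / (1 - w ^ b)) (𝓝[<] 1) (𝓝 (a / b)) := by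
  have hgeom (c : ℕ) : Tendsto (fun w : ℝ => ∑ i ∈ Finset.range c, w ^ i) (𝓝[<] 1) (𝓝 c) := by
    have hcont : Continuous fun w : ℝ => ∑ i ∈ Finset.range c, w ^ i := by fun_prop
    simpa using (hcont.tendsto 1).mono_left nhdsWithin_le_nhds
  refine ((hgeom a).div (hgeom b) (Nat.cast_ne_zero.2 hb)).congr' ?_
  filter_upwards [self_mem_nhdsWithin] with w hw
  rw [Pi.div_apply, ← mul_neg_geom_sum w a, ← mul_neg_geom_sum w b,
    mul_div_mul_left _ _ (sub_pos.2 hw).ne']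

lemma tendsto_couplingError {M : ℕ} (hM : 1 ≤ M) :
    Tendsto (couplingError M) (𝓝[<] 1) (𝓝 (7 / M)) := by
  have hM₀ : M ≠ 0 := by omega
  set K : ℝ := 4 / (1 - Real.cos (2 * M : ℝ)⁻¹)
  have hpow : Tendsto (fun w : ℝ => w ^ (M + 1)) (𝓝[<] 1) (𝓝 1) :=
    ((continuous_pow (M + 1)).tendsto' 1 1 (one_pow _)).mono_left nhdsWithin_le_nhds
  have hzpow : Tendsto (fun w : ℝ => w ^ (-(1 + (M + 1) ^ 2) : ℤ)) (𝓝[<] 1) (𝓝 1) := by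
    have hcont := continuousAt_zpow₀ (1 : ℝ) (-(1 + (M + 1) ^ 2) : ℤ) (.inl one_ne_zero)
    simpa only [one_zpow] using hcont.tendsto.mono_left nhdsWithin_le_nhds
  have hzero := ((((tendsto_one_sub_pow_div (M + 1)
    (mul_ne_zero M.succ_ne_zero hM₀)).const_mul 3).add
    ((hpow.const_sub 1).mul_const K)).div hpow one_ne_zero).const_mul 2
  have hdisc := ((tendsto_one_sub_pow_div (M + 1) hM₀).mul hzpow).sub_const 1
  convert (hzero.add hdisc).congr fun w => ?_ using 2
  · have : (M : ℝ) ≠ 0 := Nat.cast_ne_zero.2 hM₀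
    push_cast
    field_simp
    ring
  · simp only [couplingError, survivalBound_zero, Pi.div_apply, Nat.succ_eq_add_one, pow_mul, K]
    ring

lemma tendsto_rpow_one_sub_div (M : ℕ) :
    Tendsto (fun A : ℝ => (1 - 2 / A) ^ ((M + 1 : ℕ) : ℝ)⁻¹) atTop (𝓝[<] 1) := by
  have hratio : Tendsto (fun A : ℝ => 1 - 2 / A) atTop (𝓝 1) := by
    simpa using (tendsto_const_nhds.div_atTop tendsto_id).const_sub (1 : ℝ)
  refine tendsto_nhdsWithin_iff.2 ⟨?_, ?_⟩
  · simpa using hratio.rpow_const (.inl one_ne_zero)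
  · filter_upwards [eventually_gt_atTop 2] with A hA
    have hA₀ : (0 : ℝ) < A := by linarith
    exact Real.rpow_lt_one (sub_nonneg.2 ((div_le_one hA₀).2 hA.le))
      (sub_lt_self 1 (by positivity)) (by positivity)

end Comparison

end SelfRepellingWalk

/-- as `A → ∞`, the total variation distance between the law of
`(u_A, γ_A)` and the law of `(x_A, γ_A)` tends to `0`.  Here the coins are
i.i.d. uniform on `{-1,+1}`, `q_A` is geometric with
`P(q_A = k) = (2/A)(1-2/A)^{k-1}` for `k ≥ 1`, and `U` is uniform on `[0,1]`,
all independent. -/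
theorem statement11 (Pcoin : Measure (ℕ → Bool)) [IsProbabilityMeasure Pcoin]
    (hP : ∀ (s : Finset ℕ) (b : ℕ → Bool),
      Pcoin {ω | ∀ j ∈ s, ω j = b j} = (1 / 2 : ENNReal) ^ s.card)
    (geom : ℝ → Measure ℕ)
    (hgeomP : ∀ A : ℝ, 2 < A → IsProbabilityMeasure (geom A))
    (hgeom0 : ∀ A : ℝ, 2 < A → geom A {0} = 0)
    (hgeomk : ∀ A : ℝ, 2 < A → ∀ k : ℕ, 1 ≤ k →
      geom A {k} = ENNReal.ofReal ((2 / A) * (1 - 2 / A) ^ (k - 1))) :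
    Filter.Tendsto
      (fun A : ℝ =>
        tvDist
          ((Pcoin.prod ((geom A).prod (volume.restrict (Set.Icc (0 : ℝ) 1)))).map
            (fun ω => (uRV ω, gammaRV ω)))
          ((Pcoin.prod ((geom A).prod (volume.restrict (Set.Icc (0 : ℝ) 1)))).map
            (fun ω => (xRV ω, gammaRV ω))))
      Filter.atTop (nhds 0) := by
  refine tendsto_order.2 ⟨fun a ha => .of_forall fun A =>
    ha.trans_le (SelfRepellingWalk.tvDist_nonneg _ _), fun a ha => ?_⟩
  obtain ⟨M, hM⟩ := exists_nat_gt (7 / a)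
  have hM₀ : (0 : ℝ) < M := (div_pos (by norm_num) ha).trans hM
  have hM₁ : 1 ≤ M := by exact_mod_cast hM₀
  have herr := ((SelfRepellingWalk.tendsto_couplingError hM₁).comp
    (SelfRepellingWalk.tendsto_rpow_one_sub_div M)).eventually_lt_const
      ((div_lt_comm₀ ha hM₀).1 hM)
  filter_upwards [herr, eventually_gt_atTop 2] with A hlt hA
  have hgeom := hgeomP A hA
  have hratio₀ : 0 < 1 - 2 / A := sub_pos.2 ((div_lt_one (by linarith)).2 hA)
  have hratio₁ : 1 - 2 / A < 1 := sub_lt_self 1 (div_pos two_pos (by linarith))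
  refine (SelfRepellingWalk.tvDist_resampledState_le hP (Real.rpow_pos_of_pos hratio₀ _)
    (Real.rpow_lt_one hratio₀.le hratio₁ (by positivity)) hM₁
    ⟨hgeom0 A hA, fun k => ?_⟩).trans_lt hlt
  rw [hgeomk A hA (k + 1) k.succ_pos, Real.rpow_inv_natCast_pow hratio₀.le M.succ_ne_zero,
    sub_sub_cancel, Nat.add_sub_cancel]
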